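/- arXiv:2508.17308 — 2 statements merged into one kernel-verified Lean document; each statement's English description precedes it below -/
import Mathlib

section
/- Let K ⊂ U be a full compact set which is completely invariant (g⁻¹(K) = K) and satisfies P_g ⊂ K. Then the map g : U' → U has no repelling periodic points outside of K; that is, there is no integer p ≥ 1 and point a ∈ g^{-p}(U) \ K with g^p(a) = a and |(g^p)'(a)| > 1. -/
open Set Function Metric Topology Filter

noncomputable section

/-- A topological disk: a (nonempty, connected) simply connected planar domain. -/
def IsTopDisk (V : Set ℂ) : Prop :=
  IsOpen V ∧ IsConnected V ∧ SimplyConnectedSpace V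

/-- Critical points of `g` lying in `U'`. -/
def critPts (g : ℂ → ℂ) (U' : Set ℂ) : Set ℂ := {z | z ∈ U' ∧ deriv g z = 0}

/-- The postcritical set of `g : U' → U`. -/
def postCrit (g : ℂ → ℂ) (U' : Set ℂ) : Set ℂ :=
  closure (⋃ n : ℕ, g^[n] '' critPts g U')

/-- `g : U' → U` is a proper map: preimages of compact subsets of `U` are compact. -/
def ProperOn (g : ℂ → ℂ) (U' U : Set ℂ) : Prop :=
  ∀ K : Set ℂ, K ⊆ U → IsCompact K → IsCompact (U' ∩ g ⁻¹' K)

/-- `g : U' → U` has degree `d`: every point of `U` has a preimage, and every point of `U`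
which is not a critical value has exactly `d` preimages in `U'`. -/
def HasDeg (g : ℂ → ℂ) (U' U : Set ℂ) (d : ℕ) : Prop :=
  (∀ w ∈ U, (U' ∩ g ⁻¹' {w}).Nonempty) ∧
  ∀ w ∈ U, w ∉ g '' critPts g U' → (U' ∩ g ⁻¹' {w}).ncard = d

/-- Standing assumptions: `U' ⊆ U` are simply connected domains in `ℂ` with `U' ≠ U`,
`g : U' → U` is a proper holomorphic map of degree `d ≥ 2`, all forward iterates of the
critical points are defined, the postcritical set is a compact subset of `U'`, and if the
postcritical set is a singleton `{c}` then `g⁻¹(c) ≠ {c}`. -/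
structure PLSetting (g : ℂ → ℂ) (U' U : Set ℂ) (d : ℕ) : Prop where
  disk' : IsTopDisk U'
  disk : IsTopDisk U
  subset : U' ⊆ U
  ne : U' ≠ U
  two_le_d : 2 ≤ d
  holo : DifferentiableOn ℂ g U'
  mapsTo : MapsTo g U' U
  proper : ProperOn g U' U
  deg : HasDeg g U' U d
  crit_orbit : ∀ c ∈ critPts g U', ∀ n : ℕ, g^[n] c ∈ U'
  postCrit_compact : IsCompact (postCrit g U')
  postCrit_subset : postCrit g U' ⊆ U'
  postCrit_singleton : ∀ c : ℂ, postCrit g U' = {c} → U' ∩ g ⁻¹' {c} ≠ {c}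

section Helpers

open InnerProductSpace

/-- Weak subharmonicity (comparison with harmonic functions) for continuous functions. -/
def SubH (W : Set ℂ) (v : ℂ → ℝ) : Prop :=
  ContinuousOn v W ∧ ∀ B : Set ℂ, IsOpen B → IsCompact (closure B) → closure B ⊆ W →
    ∀ h : ℂ → ℝ, ContinuousOn h (closure B) → HarmonicOnNhd h B →
      (∀ z ∈ frontier B, v z ≤ h z) → ∀ z ∈ B, v z ≤ h z

theorem harm_local_re {h : ℂ → ℝ} {z : ℂ} (hh : HarmonicAt h z) :
    ∃ F : ℂ → ℂ, AnalyticAt ℂ F z ∧ h =ᶠ[𝓝 z] fun y => (F y).re := by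
  have h1 := hh.eventually
  obtain ⟨R, hR, hb⟩ := Metric.eventually_nhds_iff_ball.1 h1
  obtain ⟨F, hF, hE⟩ := InnerProductSpace.HarmonicOnNhd.exists_analyticOnNhd_ball_re_eq
    (f := h) (z := z) (R := R) (fun x hx => hb x hx)
  refine ⟨F, hF z (mem_ball_self hR), ?_⟩
  filter_upwards [ball_mem_nhds z hR] with y hy
  exact (hE hy).symm

theorem harm_comp {h : ℂ → ℝ} {g : ℂ → ℂ} {z : ℂ} (hh : HarmonicAt h (g z))
    (hg : AnalyticAt ℂ g z) : HarmonicAt (fun x => h (g x)) z := by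
  obtain ⟨F, hF, hE⟩ := harm_local_re hh
  have h1 : HarmonicAt (fun y => ((F ∘ g) y).re) z := (hF.comp hg).harmonicAt_re
  refine (harmonicAt_congr_nhds ?_).1 h1
  filter_upwards [hg.continuousAt.eventually hE] with y hy
  exact hy.symm

theorem max_principle {B : Set ℂ} (hBo : IsOpen B) (hBc : IsCompact (closure B)) {f : ℂ → ℝ}
    (hf : ContinuousOn f (closure B)) (hh : HarmonicOnNhd f B)
    (hfr : ∀ z ∈ frontier B, f z ≤ 0) : ∀ z ∈ B, f z ≤ 0 := by
  by_contra hcon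
  push Not at hcon
  obtain ⟨z0, hz0, hpos⟩ := hcon
  obtain ⟨z1, hz1, hmax⟩ := hBc.exists_isMaxOn ⟨z0, subset_closure hz0⟩ hf
  have hM : 0 < f z1 := lt_of_lt_of_le hpos (hmax (subset_closure hz0))
  set Z := closure B ∩ f ⁻¹' {f z1} with hZ
  have hZB : Z ⊆ B := by
    rintro z ⟨hz, hz'⟩
    by_contra hzB
    have : z ∈ frontier B := by rw [hBo.frontier_eq]; exact ⟨hz, hzB⟩
    have h2 := hfr z this
    have h3 : f z = f z1 := hz'
    linarith
  have hZc : IsClosed Z := hf.preimage_isClosed_of_isClosed isClosed_closure isClosed_singleton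
  have hZo : IsOpen Z := by
    rw [isOpen_iff_mem_nhds]
    intro z hz
    have hzB := hZB hz
    obtain ⟨F, hF, hE⟩ := harm_local_re (hh z hzB)
    have hfz : f z = f z1 := hz.2
    have hloc : IsLocalMax (norm ∘ fun y => Complex.exp (F y)) z := by
      have e0 : f z = (F z).re := hE.self_of_nhds
      filter_upwards [hE, hBo.mem_nhds hzB] with y hy hyB
      simp only [Function.comp, Complex.norm_exp]
      rw [Real.exp_le_exp, ← hy, ← e0, hfz]
      exact hmax (subset_closure hyB)
    have hd : ∀ᶠ y in 𝓝 z, DifferentiableAt ℂ (fun y => Complex.exp (F y)) y := by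
      filter_upwards [hF.eventually_analyticAt] with y hy
      exact hy.differentiableAt.cexp
    have h4 := Complex.eventually_eq_of_isLocalMax_norm hd hloc
    have e0 : f z = (F z).re := hE.self_of_nhds
    filter_upwards [h4, hE, hBo.mem_nhds hzB] with y hy1 hy2 hyB
    refine ⟨subset_closure hyB, ?_⟩
    have := congrArg norm hy1
    simp only [Complex.norm_exp] at this
    have := Real.exp_injective this
    show f y = f z1
    rw [hy2, this, ← e0, hfz]
  have hu : Z = univ := IsClopen.eq_univ ⟨hZc, hZo⟩ ⟨z1, hz1, rfl⟩
  have : IsCompact (univ : Set ℂ) := hu ▸ hBc.of_isClosed_subset hZc inter_subset_left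
  exact noncompact_univ ℂ this

theorem SubH.of_harm {W : Set ℂ} {v : ℂ → ℝ} (hv : HarmonicOnNhd v W) : SubH W v := by
  refine ⟨hv.continuousOn, fun B hBo hBc hBW h hc hh hfr z hz => ?_⟩
  have := max_principle hBo hBc (f := fun y => v y - h y)
    ((hv.continuousOn.mono hBW).sub hc)
    (fun y hy => (hv y (hBW (subset_closure hy))).sub (hh y hy))
    (fun y hy => by have := hfr y hy; linarith) z hz
  linarith

theorem SubH.add_harm {W : Set ℂ} {v h0 : ℂ → ℝ} (hv : SubH W v) (h0h : HarmonicOnNhd h0 W) :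
    SubH W (fun z => v z + h0 z) := by
  refine ⟨hv.1.add h0h.continuousOn, fun B hBo hBc hBW h hc hh hfr z hz => ?_⟩
  have := hv.2 B hBo hBc hBW (fun y => h y - h0 y) (hc.sub (h0h.continuousOn.mono hBW))
    (fun y hy => (hh y hy).sub (h0h y (hBW (subset_closure hy))))
    (fun y hy => by have := hfr y hy; linarith) z hz
  linarith

theorem SubH.mono {W W' : Set ℂ} {v : ℂ → ℝ} (hv : SubH W v) (h : W' ⊆ W) : SubH W' v :=
  ⟨hv.1.mono h, fun B h1 h2 h3 => hv.2 B h1 h2 (h3.trans h)⟩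

theorem SubH.relaxed {O D : Set ℂ} {w h : ℂ → ℝ} (hw : SubH O w) (hDo : IsOpen D)
    (hDc : IsCompact (closure D)) (hDO : D ⊆ O) (hwc : ContinuousOn w (closure D))
    (hc : ContinuousOn h (closure D)) (hh : HarmonicOnNhd h D)
    (hfr : ∀ z ∈ frontier D, w z ≤ h z) : ∀ z ∈ D, w z ≤ h z := by
  by_contra hcon
  push Not at hcon
  obtain ⟨z0, hz0, hpos⟩ := hcon
  set m := w z0 - h z0 with hm
  have hmp : 0 < m := by rw [hm]; linarith
  set Z := closure D ∩ (fun z => w z - h z) ⁻¹' (Ici (m/2)) with hZ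
  have hZc : IsClosed Z :=
    (hwc.sub hc).preimage_isClosed_of_isClosed isClosed_closure isClosed_Ici
  have hZk : IsCompact Z := hDc.of_isClosed_subset hZc inter_subset_left
  have hZD : Z ⊆ D := by
    rintro z ⟨hz, hz'⟩
    by_contra hzB
    have : z ∈ frontier D := by rw [hDo.frontier_eq]; exact ⟨hz, hzB⟩
    have h2 := hfr z this
    simp only [mem_preimage, mem_Ici] at hz'
    linarith
  obtain ⟨B, hBo, hZB, hBD, hBc⟩ := exists_open_between_and_isCompact_closure hZk hDo hZD
  have hz0Z : z0 ∈ Z := ⟨subset_closure hz0, by simp only [mem_preimage, mem_Ici]; linarith⟩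
  have := hw.2 B hBo hBc (hBD.trans hDO) (fun z => h z + m/2)
    ((hc.mono (hBD.trans subset_closure)).add continuousOn_const)
    (fun y hy => (hh y (hBD (subset_closure hy))).add (harmonicAt_const _))
    (fun y hy => by
      have hyD : y ∈ D := hBD hy.1
      have hyZ : y ∉ Z := fun h => by
        rw [hBo.frontier_eq] at hy; exact hy.2 (hZB h)
      by_contra hlt
      push Not at hlt
      exact hyZ ⟨subset_closure hyD, by simp only [mem_preimage, mem_Ici]; linarith⟩) z0 (hZB hz0Z)
  linarith

open Classical in
theorem SubH.glue {W O : Set ℂ} {v w : ℂ → ℝ} (hv : SubH W v) (hO : IsOpen O) 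
    (hw : SubH O w) (hwc : ContinuousOn w (W ∩ closure O))
    (hfr : ∀ z ∈ W ∩ frontier O, w z ≤ v z) :
    SubH W (fun z => if z ∈ O then max (v z) (w z) else v z) := by
  constructor
  · refine ContinuousOn.if ?_ ?_ ?_
    · rintro a ⟨h1, h2⟩
      exact max_eq_left (hfr a ⟨h1, h2⟩)
    · exact (hv.1.mono inter_subset_left).sup hwc
    · exact hv.1.mono inter_subset_left
  · intro B hBo hBc hBW h hc hh hbd
    have hvV : ∀ z, v z ≤ (if z ∈ O then max (v z) (w z) else v z) := by
      intro z; split_ifs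
      · exact le_max_left _ _
      · exact le_rfl
    have hvh : ∀ z ∈ B, v z ≤ h z := hv.2 B hBo hBc hBW h hc hh
      (fun z hz => (hvV z).trans (hbd z hz))
    have hsub1 : closure (B ∩ O) ⊆ closure B := closure_mono inter_subset_left
    have hsub2 : closure (B ∩ O) ⊆ closure O := closure_mono inter_subset_right
    have key := hw.relaxed (hBo.inter hO) (hBc.of_isClosed_subset isClosed_closure hsub1)
      inter_subset_right (hwc.mono (fun z hz => ⟨hBW (hsub1 hz), hsub2 hz⟩))
      (hc.mono hsub1) (fun z hz => hh z hz.1) (by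
        intro z hz
        rw [(hBo.inter hO).frontier_eq] at hz
        obtain ⟨hz1, hz2⟩ := hz
        by_cases hzO : z ∈ O
        · have hzB : z ∉ B := fun h => hz2 ⟨h, hzO⟩
          have := hbd z (by rw [hBo.frontier_eq]; exact ⟨hsub1 hz1, hzB⟩)
          simp only [if_pos hzO] at this
          exact (le_max_right _ _).trans this
        · have hzf : w z ≤ v z := hfr z ⟨hBW (hsub1 hz1), by
            rw [hO.frontier_eq]; exact ⟨hsub2 hz1, hzO⟩⟩
          refine hzf.trans ?_
          by_cases hzB : z ∈ B
          · exact hvh z hzB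
          · exact (hvV z).trans (hbd z (by rw [hBo.frontier_eq]; exact ⟨hsub1 hz1, hzB⟩)))
    intro z hz
    beta_reduce
    split_ifs with hzO
    · exact max_le (hvh z hz) (key z ⟨hz, hzO⟩)
    · exact hvh z hz

theorem SubH.max {W : Set ℂ} {v w : ℂ → ℝ} (hv : SubH W v) (hw : SubH W w) :
    SubH W (fun z => max (v z) (w z)) := by
  refine ⟨hv.1.sup hw.1, fun B h1 h2 h3 h h4 h5 h6 z hz => max_le ?_ ?_⟩
  · exact hv.2 B h1 h2 h3 h h4 h5 (fun y hy => (le_max_left _ _).trans (h6 y hy)) z hz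
  · exact hw.2 B h1 h2 h3 h h4 h5 (fun y hy => (le_max_right _ _).trans (h6 y hy)) z hz

/-- open mapping for nonconstant maps, in neighbourhood form -/
theorem push_sub {U U' : Set ℂ} {g : ℂ → ℂ} (hUo : IsOpen U) (hU'o : IsOpen U')
    (hg : DifferentiableOn ℂ g U')
    (hmap : MapsTo g U' U) (hprop : ProperOn g U' U)
    (hsurj : ∀ w ∈ U, (U' ∩ g ⁻¹' {w}).Nonempty)
    (hopen : ∀ z ∈ U', 𝓝 (g z) ≤ Filter.map g (𝓝 z))
    {v : ℂ → ℝ} (hv : SubH U' v) :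
    ∃ w : ℂ → ℝ, SubH U w ∧ (∀ x ∈ U', v x ≤ w (g x)) ∧
      ∀ y ∈ U, ∃ x ∈ U', g x = y ∧ w y = v x := by
  set w : ℂ → ℝ := fun y => sSup (v '' (U' ∩ g ⁻¹' {y})) with hw
  have hfib : ∀ y ∈ U, IsCompact (U' ∩ g ⁻¹' {y}) := fun y hy =>
    hprop {y} (singleton_subset_iff.2 hy) isCompact_singleton
  have hatt : ∀ y ∈ U, ∃ x ∈ U', g x = y ∧ w y = v x := by
    intro y hy
    obtain ⟨x, hx, hm, -⟩ := (hfib y hy).exists_sSup_image_eq_and_ge (hsurj y hy)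
      (hv.1.mono inter_subset_left)
    exact ⟨x, hx.1, hx.2, hm⟩
  have hle : ∀ x ∈ U', v x ≤ w (g x) := by
    intro x hx
    exact le_csSup ((hfib _ (hmap hx)).bddAbove_image (hv.1.mono inter_subset_left))
      ⟨x, ⟨hx, rfl⟩, rfl⟩
  refine ⟨w, ⟨?_, ?_⟩, hle, hatt⟩
  · intro y0 hy0
    apply ContinuousAt.continuousWithinAt
    rw [continuousAt_iff_lower_upperSemicontinuousAt]
    constructor
    · intro a ha
      obtain ⟨x, hx, hgx, hwx⟩ := hatt y0 hy0
      rw [hwx] at ha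
      have h1 : ∀ᶠ x' in 𝓝 x, a < v x' ∧ x' ∈ U' :=
        ((hv.1.continuousAt (hU'o.mem_nhds hx)).eventually (lt_mem_nhds ha)).and
          (hU'o.mem_nhds hx)
      have h2 := hopen x hx (image_mem_map h1)
      rw [hgx] at h2
      filter_upwards [h2]
      rintro y ⟨x', ⟨h3, h4⟩, rfl⟩
      exact h3.trans_le (hle x' h4)
    · intro a ha
      obtain ⟨R, hR, hRU⟩ := Metric.nhds_basis_closedBall.mem_iff.1 (hUo.mem_nhds hy0)
      have hC := hprop _ hRU (isCompact_closedBall y0 R)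
      have hA : IsCompact ((U' ∩ g ⁻¹' closedBall y0 R) ∩ v ⁻¹' Ici a) :=
        hC.of_isClosed_subset ((hv.1.mono inter_subset_left).preimage_isClosed_of_isClosed
          hC.isClosed isClosed_Ici) inter_subset_left
      have hI : IsClosed (g '' ((U' ∩ g ⁻¹' closedBall y0 R) ∩ v ⁻¹' Ici a)) :=
        (hA.image_of_continuousOn (hg.continuousOn.mono fun x hx => hx.1.1)).isClosed
      have hn : y0 ∈ (g '' ((U' ∩ g ⁻¹' closedBall y0 R) ∩ v ⁻¹' Ici a))ᶜ := by
        rintro ⟨x, ⟨⟨hx1, hx2⟩, hx3⟩, rfl⟩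
        have := hle x hx1
        simp only [mem_preimage, mem_Ici] at hx3
        linarith
      filter_upwards [hI.isOpen_compl.mem_nhds hn, closedBall_mem_nhds y0 hR] with y hy1 hy2
      obtain ⟨x, hx, hgx, hwx⟩ := hatt y (hRU hy2)
      by_contra hcon
      push Not at hcon
      refine hy1 ⟨x, ⟨⟨hx, ?_⟩, ?_⟩, hgx⟩
      · rw [mem_preimage, hgx]; exact hy2
      · rw [mem_preimage, ← hwx]; exact hcon
  · intro B hBo hBc hBU h hc hh hfr
    have hDo : IsOpen (U' ∩ g ⁻¹' B) := hg.continuousOn.isOpen_inter_preimage hU'o hBo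
    have hP := hprop _ hBU hBc
    have hsub : closure (U' ∩ g ⁻¹' B) ⊆ U' ∩ g ⁻¹' (closure B) :=
      closure_minimal (fun x hx => ⟨hx.1, subset_closure hx.2⟩) hP.isClosed
    have key := hv.2 (U' ∩ g ⁻¹' B) hDo (hP.of_isClosed_subset isClosed_closure hsub)
      (hsub.trans inter_subset_left) (fun x => h (g x))
      (hc.comp (hg.continuousOn.mono (hsub.trans inter_subset_left)) (fun x hx => (hsub hx).2))
      (fun x hx => harm_comp (hh _ hx.2) (hg.analyticAt (hU'o.mem_nhds hx.1)))
      (by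
        intro x hx
        rw [hDo.frontier_eq] at hx
        have h1 := hsub hx.1
        refine (hle x h1.1).trans (hfr _ ?_)
        rw [hBo.frontier_eq]
        exact ⟨h1.2, fun h => hx.2 ⟨h1.1, h⟩⟩)
    intro y hy
    obtain ⟨x, hx, hgx, hwx⟩ := hatt y (hBU (subset_closure hy))
    rw [hwx, ← hgx]
    exact key x ⟨hx, by rw [mem_preimage, hgx]; exact hy⟩

theorem ker_exists (c : ℂ) {ϱ : ℝ} (hϱ : 0 < ϱ) {e : ℂ} (he : e ∈ sphere c ϱ) {r : ℝ}
    (hr : 0 < r) : ∃ k : ℂ → ℝ, HarmonicOnNhd k (closedBall c ϱ) ∧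
      (∀ z ∈ closedBall c ϱ, k z ≤ 1) ∧ (∀ z ∈ sphere c ϱ, z ∉ ball e r → k z ≤ 0) ∧ 0 < k c := by
  have hec : ‖e - c‖ = ϱ := by simpa [dist_eq_norm] using he
  have hec0 : e - c ≠ 0 := by rw [← norm_pos_iff, hec]; exact hϱ
  set σ := (r / ϱ) ^ 2 / 2 with hσ
  have hσp : 0 < σ := by positivity
  set t := min (1/4) (σ/4) with ht
  have htp : 0 < t := by positivity
  have ht1 : t ≤ 1/4 := min_le_left _ _
  have ht2 : t ≤ σ/4 := min_le_right _ _
  set ζ : ℂ → ℂ := fun z => (z - c) / (e - c) with hζ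
  have hζn : ∀ z, ‖ζ z‖ = ‖z - c‖ / ϱ := fun z => by simp [hζ, hec]
  have hζle : ∀ z ∈ closedBall c ϱ, ‖ζ z‖ ≤ 1 := by
    intro z hz
    rw [hζn, div_le_one hϱ]
    simpa [dist_eq_norm] using hz
  have hden : ∀ z ∈ closedBall c ϱ, t ≤ ‖(1 + t : ℂ) - ζ z‖ := by
    intro z hz
    have h1 := hζle z hz
    have h2 := norm_sub_norm_le (1 + t : ℂ) (ζ z)
    have h3 : ‖(1 + t : ℂ)‖ = 1 + t := by
      have : (1 + t : ℂ) = ((1 + t : ℝ) : ℂ) := by push_cast; rfl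
      rw [this, Complex.norm_real, Real.norm_of_nonneg (by linarith)]
    linarith
  refine ⟨fun z => t * ((((1 + t : ℂ) - ζ z)⁻¹).re - 5/8), ?_, ?_, ?_, ?_⟩
  · intro z hz
    have hne : (1 + t : ℂ) - ζ z ≠ 0 := by
      rw [← norm_pos_iff]; exact htp.trans_le (hden z hz)
    have h1 : AnalyticAt ℂ (fun z => t * (((1 + t : ℂ) - ζ z)⁻¹ - 5/8)) z := by
      have : AnalyticAt ℂ (fun z => (1 + t : ℂ) - ζ z) z := by
        simp only [hζ]; fun_prop (disch := assumption)
      exact analyticAt_const.mul ((this.inv hne).sub analyticAt_const)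
    have h2 := h1.harmonicAt_re
    refine (harmonicAt_congr_nhds (Eventually.of_forall fun y => ?_)).1 h2
    have e1 : ((5/8 : ℂ)) = ((5/8 : ℝ) : ℂ) := by push_cast; rfl
    simp only [Complex.re_ofReal_mul, Complex.sub_re, e1, Complex.ofReal_re]
  · intro z hz
    have h1 := hden z hz
    have h2 : (((1 + t : ℂ) - ζ z)⁻¹).re ≤ t⁻¹ := by
      refine (Complex.re_le_norm _).trans ?_
      rw [norm_inv]
      exact inv_anti₀ htp h1
    have h3 : t * t⁻¹ = 1 := mul_inv_cancel₀ htp.ne'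
    have : t * ((((1 + t : ℂ) - ζ z)⁻¹).re - 5/8) ≤ t * t⁻¹ := by
      apply mul_le_mul_of_nonneg_left _ htp.le; linarith
    linarith
  · intro z hz hzr
    have hn1 : ‖ζ z‖ = 1 := by
      rw [hζn, div_eq_one_iff_eq hϱ.ne']
      simpa [dist_eq_norm] using hz
    have hab : (ζ z).re ^ 2 + (ζ z).im ^ 2 = 1 := by
      have := Complex.sq_norm (ζ z)
      rw [hn1, Complex.normSq_apply] at this
      linarith
    have hdist : r / ϱ ≤ ‖ζ z - 1‖ := by
      have e1 : ζ z - 1 = (z - e) / (e - c) := by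
        simp only [hζ]; field_simp; ring
      rw [e1, norm_div, hec]
      apply div_le_div_of_nonneg_right _ hϱ.le
      simpa [dist_eq_norm] using hzr
    have hs : σ ≤ 1 - (ζ z).re := by
      have h1 : (r/ϱ)^2 ≤ ‖ζ z - 1‖^2 := by gcongr
      rw [Complex.sq_norm, Complex.normSq_apply] at h1
      simp only [Complex.sub_re, Complex.sub_im, Complex.one_re, Complex.one_im] at h1
      rw [hσ]; nlinarith
    have h4 : (((1 + t : ℂ) - ζ z)⁻¹).re ≤ 5/8 := by
      have hpos := hden z (sphere_subset_closedBall hz)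
      have hpos2 : 0 < Complex.normSq ((1 + t : ℂ) - ζ z) := by
        rw [Complex.normSq_pos, ← norm_pos_iff]; linarith
      rw [Complex.inv_re, div_le_iff₀ hpos2, Complex.normSq_apply]
      simp only [Complex.sub_re, Complex.sub_im, Complex.add_re, Complex.add_im, Complex.one_re, Complex.one_im,
        Complex.ofReal_re, Complex.ofReal_im]
      nlinarith
    have : 0 ≤ t * (5/8 - (((1 + t : ℂ) - ζ z)⁻¹).re) := mul_nonneg htp.le (by linarith)
    linarith
  · have e1 : ((1 + t : ℂ) - ζ c)⁻¹ = (((1 + t)⁻¹ : ℝ) : ℂ) := by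
      simp [hζ]
    beta_reduce
    rw [e1, Complex.ofReal_re]
    have : (4/5 : ℝ) ≤ (1 + t)⁻¹ := by
      rw [le_inv_comm₀ (by norm_num) (by linarith)]; norm_num; linarith
    apply mul_pos htp; linarith

theorem clopen_prop {W G E : Set ℂ} (hW : IsOpen W) (hG : IsOpen G)
    (hp : ∀ (c : ℂ) (ϱ : ℝ), 0 < ϱ → closedBall c ϱ ⊆ W → ∀ e ∈ sphere c ϱ, e ∈ G → c ∈ G)
    (hE : IsPreconnected E) (hEW : E ⊆ W) (hne : (E ∩ G).Nonempty) : E ⊆ G := by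
  refine hE.subset_of_closure_inter_subset hG hne ?_
  rintro c ⟨hc, hcE⟩
  obtain ⟨R, hR, hRW⟩ := Metric.nhds_basis_closedBall.mem_iff.1 (hW.mem_nhds (hEW hcE))
  obtain ⟨e, he, hd⟩ := Metric.mem_closure_iff.1 hc R hR
  by_cases hec : e = c
  · exact hec ▸ he
  · refine hp c (dist e c) (dist_pos.2 hec) ((closedBall_subset_closedBall ?_).trans hRW) e rfl he
    rw [dist_comm]; exact hd.le

/-- The set of points near which all members of a family are bounded away from `1`. -/
def negG (W : Set ℂ) (𝓕 : Set (ℂ → ℝ)) : Set ℂ :=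
  {z | ∃ δ > 0, ∃ r > 0, ball z r ⊆ W ∧ ∀ v ∈ 𝓕, ∀ y ∈ ball z r, v y ≤ 1 - δ}

theorem negG_open (W : Set ℂ) (𝓕 : Set (ℂ → ℝ)) : IsOpen (negG W 𝓕) := by
  rw [Metric.isOpen_iff]
  rintro z ⟨δ, hδ, r, hr, h1, h2⟩
  refine ⟨r/2, by positivity, fun y hy => ⟨δ, hδ, r/2, by positivity, ?_, ?_⟩⟩
  all_goals
    have hs : ball y (r/2) ⊆ ball z r := ball_subset_ball' (by rw [mem_ball] at hy; linarith)
  · exact hs.trans h1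
  · exact fun v hv x hx => h2 v hv x (hs hx)

theorem negG_prop {W : Set ℂ} {𝓕 : Set (ℂ → ℝ)} (hs : ∀ v ∈ 𝓕, SubH W v)
    (h1 : ∀ v ∈ 𝓕, ∀ z ∈ W, v z ≤ 1) (c : ℂ) (ϱ : ℝ) (hϱ : 0 < ϱ) (hcW : closedBall c ϱ ⊆ W)
    (e : ℂ) (he : e ∈ sphere c ϱ) (heG : e ∈ negG W 𝓕) : c ∈ negG W 𝓕 := by
  obtain ⟨δ, hδ, r, hr, hb, hv⟩ := heG
  obtain ⟨k, hk, hk1, hk0, hkc⟩ := ker_exists c hϱ he hr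
  have hkey : ∀ v ∈ 𝓕, ∀ z ∈ ball c ϱ, v z ≤ 1 - δ * k z := by
    intro v hvF
    have hcl : closure (ball c ϱ) = closedBall c ϱ := closure_ball c hϱ.ne'
    refine (hs v hvF).2 (ball c ϱ) isOpen_ball ?_ ?_ (fun z => 1 - δ * k z) ?_ ?_ ?_
    · rw [hcl]; exact isCompact_closedBall _ _
    · rw [hcl]; exact hcW
    · rw [hcl]; exact continuousOn_const.sub (continuousOn_const.mul hk.continuousOn)
    · intro z hz
      have h3 : HarmonicAt (δ • k) z := (hk z (ball_subset_closedBall hz)).const_smul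
      exact (harmonicAt_const (1:ℝ)).sub h3
    · intro z hz
      rw [frontier_ball c hϱ.ne'] at hz
      have hzc := sphere_subset_closedBall hz
      by_cases hzr : z ∈ ball e r
      · have := hv v hvF z hzr
        have := mul_le_mul_of_nonneg_left (hk1 z hzc) hδ.le
        linarith
      · have := h1 v hvF z (hcW hzc)
        have := mul_le_mul_of_nonneg_left (hk0 z hz hzr) hδ.le
        linarith
  have hkcont : ContinuousAt k c :=
    hk.continuousOn.continuousAt (closedBall_mem_nhds c hϱ)
  have hev : ∀ᶠ z in 𝓝 c, k c / 2 < k z ∧ z ∈ ball c ϱ :=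
    (hkcont.eventually (lt_mem_nhds (by linarith))).and (ball_mem_nhds c hϱ)
  obtain ⟨r', hr', hb'⟩ := Metric.eventually_nhds_iff_ball.1 hev
  refine ⟨δ * (k c / 2), by positivity, r', hr', 
    fun z hz => hcW (ball_subset_closedBall (hb' z hz).2), fun v hvF y hy => ?_⟩
  have h5 := hkey v hvF y (hb' y hy).2
  have := mul_le_mul_of_nonneg_left (hb' y hy).1.le hδ.le
  linarith

theorem int_range_discrete : IsDiscrete (range ((↑) : ℤ → ℝ)) := by
  constructor
  have h := Int.isClosedEmbedding_coe_real.isEmbedding.toHomeomorph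
  exact h.symm.isEmbedding.discreteTopology

theorem exp_lift_unique {S : Set ℂ} (hS : IsPreconnected S) {a b : ℂ → ℂ} (ha : ContinuousOn a S)
    (hb : ContinuousOn b S) (hab : ∀ z ∈ S, Complex.exp (a z) = Complex.exp (b z)) :
    ∃ n : ℤ, ∀ z ∈ S, a z = b z + n * (2 * Real.pi * Complex.I) := by
  rcases S.eq_empty_or_nonempty with rfl | ⟨z0, hz0⟩
  · exact ⟨0, fun z hz => hz.elim⟩
  have hne := Complex.two_pi_I_ne_zero
  have hn : ∀ z ∈ S, ∃ n : ℤ, a z = b z + n * (2 * Real.pi * Complex.I) := fun z hz =>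
    Complex.exp_eq_exp_iff_exists_int.1 (hab z hz)
  have hD : ∀ z ∈ S, ∀ n : ℤ, a z = b z + n * (2 * Real.pi * Complex.I) →
      ((a z - b z) / (2 * Real.pi * Complex.I)).re = n := by
    intro z hz n h
    rw [h, add_sub_cancel_left, mul_div_cancel_right₀ _ hne]; simp
  have hcst : ∀ z ∈ S, ((a z - b z) / (2 * Real.pi * Complex.I)).re =
      ((a z0 - b z0) / (2 * Real.pi * Complex.I)).re := by
    intro z hz
    refine hS.constant_of_mapsTo int_range_discrete
      (f := fun z => ((a z - b z) / (2 * Real.pi * Complex.I)).re) ?_ ?_ hz hz0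
    · exact Complex.continuous_re.comp_continuousOn ((ha.sub hb).div_const _)
    · intro y hy
      obtain ⟨n, h⟩ := hn y hy
      exact ⟨n, (hD y hy n h).symm⟩
  obtain ⟨n, h⟩ := hn z0 hz0
  refine ⟨n, fun z hz => ?_⟩
  obtain ⟨m, h'⟩ := hn z hz
  have := hcst z hz
  rw [hD z hz m h', hD z0 hz0 n h] at this
  have : m = n := by exact_mod_cast this
  rw [h', this]

theorem simplyConnected_univ : IsSimplyConnected (univ : Set ℂ) := by
  have : ContractibleSpace (univ : Set ℂ) := convex_univ.contractibleSpace ⟨0, mem_univ 0⟩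
  show SimplyConnectedSpace _
  infer_instance

theorem diff_connected {V K : Set ℂ} (hVo : IsOpen V) (hV : IsPreconnected V) (hK : IsCompact K)
    (hKV : K ⊆ V) (hKc : IsPreconnected Kᶜ) : IsPreconnected (V \ K) := by
  apply isPreconnected_of_forall_constant
  intro f hf
  obtain ⟨B, hBo, hKB, hBV, hBc⟩ := exists_open_between_and_isCompact_closure hK hVo hKV
  obtain ⟨B2, hB2o, hKB2, hB2B, hB2c⟩ := exists_open_between_and_isCompact_closure hK hBo hKB
  obtain ⟨χ, hχ0, hχ1, -⟩ := exists_continuous_zero_one_of_isClosed (s := Bᶜ) (t := closure B2)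
    hBo.isClosed_compl isClosed_closure (by
      rw [Set.disjoint_left]; exact fun x hx hx2 => hx (hB2B hx2))
  set φ : ℂ → ℂ := fun z => if f z then 1 else 0 with hφ
  have hφc : ContinuousOn φ (V \ K) :=
    (continuous_of_discreteTopology (f := fun b : Bool => if b then (1:ℂ) else 0)).comp_continuousOn hf
  set θ1 : ℂ → ℂ := fun z => (1 - χ z) * φ z with hθ1
  set θ2 : ℂ → ℂ := fun z => - (χ z) * φ z with hθ2
  have hχc : Continuous (fun z => (χ z : ℂ)) := Complex.continuous_ofReal.comp χ.continuous
  have hVK : IsOpen (V \ K) := hVo.sdiff hK.isClosed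
  have h1 : ContinuousOn θ1 V := by
    intro z hz
    apply ContinuousAt.continuousWithinAt
    by_cases hzK : z ∈ K
    · have : θ1 =ᶠ[𝓝 z] fun _ => 0 := by
        filter_upwards [hB2o.mem_nhds (hKB2 hzK)] with y hy
        have := hχ1 (subset_closure hy)
        simp [hθ1, this]
      exact continuousAt_const.congr this.symm
    · exact ((continuous_const.sub hχc).continuousAt).mul
        (hφc.continuousAt (hVK.mem_nhds ⟨hz, hzK⟩))
  have h2 : ContinuousOn θ2 Kᶜ := by
    intro z hz
    apply ContinuousAt.continuousWithinAt
    by_cases hzV : z ∈ V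
    · exact hχc.neg.continuousAt.mul (hφc.continuousAt (hVK.mem_nhds ⟨hzV, hz⟩))
    · have : θ2 =ᶠ[𝓝 z] fun _ => 0 := by
        filter_upwards [isClosed_closure.isOpen_compl.mem_nhds (fun h => hzV (hBV h) :
          z ∈ (closure B)ᶜ)] with y hy
        have := hχ0 (fun h => hy (subset_closure h) : y ∈ Bᶜ)
        simp [hθ2, this]
      exact continuousAt_const.congr this.symm
  set E1 : ℂ → ℂ := fun z => θ1 z * (2 * Real.pi * Complex.I) with hE1
  set E2 : ℂ → ℂ := fun z => θ2 z * (2 * Real.pi * Complex.I) with hE2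
  have h12 : ∀ z, θ1 z = θ2 z + φ z := fun z => by simp only [hθ1, hθ2]; ring
  have hEE : ∀ z, Complex.exp (E1 z) = Complex.exp (E2 z) := by
    intro z
    rw [Complex.exp_eq_exp_iff_exists_int]
    refine ⟨if f z then 1 else 0, ?_⟩
    simp only [hE1, hE2, h12, hφ]
    split_ifs <;> push_cast <;> ring
  have hFc : Continuous fun z => Complex.exp (E1 z) := by
    rw [continuous_iff_continuousAt]
    intro z
    by_cases hzK : z ∈ K
    · exact ((h1.continuousAt (hVo.mem_nhds (hKV hzK))).mul continuousAt_const).cexp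
    · have : ContinuousAt (fun z => Complex.exp (E2 z)) z :=
        ((h2.continuousAt (hK.isClosed.isOpen_compl.mem_nhds hzK)).mul continuousAt_const).cexp
      simpa only [hEE] using this
  obtain ⟨ψ, hψc, hψ⟩ := Complex.exists_continuousOn_eqOn_exp_comp simplyConnected_univ
    isOpen_univ hFc.continuousOn (by rintro ⟨z, -, hz⟩; exact Complex.exp_ne_zero _ hz)
  obtain ⟨n1, hn1⟩ := exp_lift_unique hV (hψc.mono (subset_univ _))
    (h1.mul continuousOn_const : ContinuousOn E1 V) (fun z _ => hψ (mem_univ z))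
  obtain ⟨n2, hn2⟩ := exp_lift_unique hKc (hψc.mono (subset_univ _))
    (h2.mul continuousOn_const : ContinuousOn E2 Kᶜ) (fun z _ => (hψ (mem_univ z)).trans (hEE z))
  have hne := Complex.two_pi_I_ne_zero
  have hfin : ∀ z ∈ V \ K, φ z = n2 - n1 := by
    intro z hz
    have e1 : ψ z = θ1 z * (2 * Real.pi * Complex.I) + n1 * (2 * Real.pi * Complex.I) := hn1 z hz.1
    have e2 : ψ z = θ2 z * (2 * Real.pi * Complex.I) + n2 * (2 * Real.pi * Complex.I) := hn2 z hz.2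
    rw [h12] at e1
    apply mul_right_cancel₀ hne
    linear_combination e2 - e1
  intro x hx y hy
  have := (hfin x hx).trans (hfin y hy).symm
  simp only [hφ] at this
  by_cases h1 : f x <;> by_cases h2 : f y <;> simp_all

theorem root_diffAt {n : ℕ} (hn : n ≠ 0) {F G : ℂ → ℂ} {z : ℂ} (hF : ContinuousAt F z)
    (hFG : ∀ᶠ y in 𝓝 z, F y ^ n = G y) (hG : DifferentiableAt ℂ G z) (h0 : G z ≠ 0) :
    DifferentiableAt ℂ F z := by
  have hFz : F z ≠ 0 := by
    intro h
    have := hFG.self_of_nhds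
    rw [h, zero_pow hn] at this
    exact h0 this.symm
  have hd : HasStrictDerivAt (fun s : ℂ => s ^ n) (n * F z ^ (n-1)) (F z) := by
    simpa using hasStrictDerivAt_pow n (F z)
  have hd0 : (n * F z ^ (n-1) : ℂ) ≠ 0 := mul_ne_zero (by exact_mod_cast hn) (pow_ne_zero _ hFz)
  have hinv := hd.to_localInverse hd0
  have hleft : ∀ᶠ x in 𝓝 (F z), hd.localInverse _ _ _ hd0 (x ^ n) = x :=
    HasStrictFDerivAt.eventually_left_inverse (hd.hasStrictFDerivAt_equiv hd0)
  have h1 := hF.eventually hleft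
  have h2 : F =ᶠ[𝓝 z] fun y => hd.localInverse _ _ _ hd0 (G y) := by
    filter_upwards [h1, hFG] with y hy1 hy2
    rw [← hy2, hy1]
  refine DifferentiableAt.congr_of_eventuallyEq ?_ h2
  have e : F z ^ n = G z := hFG.self_of_nhds
  have h3 : DifferentiableAt ℂ (hd.localInverse _ _ _ hd0) (G z) := by
    rw [← e]; exact hinv.hasDerivAt.differentiableAt
  exact h3.comp z hG

def SS (K W : Set ℂ) : Set (ℂ → ℝ) :=
  {v | SubH W v ∧ (∀ z ∈ W, v z ≤ 1) ∧ ∀ z ∈ K, v z ≤ 0}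

def diffG (K U U' : Set ℂ) : Set ℂ :=
  {z | ∃ δ > 0, ∃ r > 0, ball z r ⊆ U' \ K ∧ ∀ v ∈ SS K U, ∃ v' ∈ SS K U',
    (∀ x ∈ U', v x ≤ v' x) ∧ ∀ y ∈ ball z r, v y + δ ≤ v' y}

theorem diffG_open (K U U' : Set ℂ) : IsOpen (diffG K U U') := by
  rw [Metric.isOpen_iff]
  rintro z ⟨δ, hδ, r, hr, h1, h2⟩
  refine ⟨r/2, by positivity, fun y hy => ⟨δ, hδ, r/2, by positivity, ?_, ?_⟩⟩
  all_goals
    have hs : ball y (r/2) ⊆ ball z r := ball_subset_ball' (by rw [mem_ball] at hy; linarith)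
  · exact hs.trans h1
  · intro v hv
    obtain ⟨v', hv', h3, h4⟩ := h2 v hv
    exact ⟨v', hv', h3, fun x hx => h4 x (hs hx)⟩

open Classical in
theorem diffG_prop {K U U' : Set ℂ} (hUU : U' ⊆ U) (c : ℂ) (ϱ : ℝ) (hϱ : 0 < ϱ)
    (hcW : closedBall c ϱ ⊆ U' \ K) (e : ℂ) (he : e ∈ sphere c ϱ) (heG : e ∈ diffG K U U') :
    c ∈ diffG K U U' := by
  obtain ⟨δ, hδ, r, hr, hb, hv⟩ := heG
  obtain ⟨k, hk, hk1, hk0, hkc⟩ := ker_exists c hϱ he hr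
  have hkcont : ContinuousAt k c :=
    hk.continuousOn.continuousAt (closedBall_mem_nhds c hϱ)
  have hev : ∀ᶠ z in 𝓝 c, k c / 2 < k z ∧ z ∈ ball c ϱ :=
    (hkcont.eventually (lt_mem_nhds (by linarith))).and (ball_mem_nhds c hϱ)
  obtain ⟨r', hr', hb'⟩ := Metric.eventually_nhds_iff_ball.1 hev
  refine ⟨δ * (k c / 2), by positivity, r', hr', 
    fun z hz => hcW (ball_subset_closedBall (hb' z hz).2), fun v hvS => ?_⟩
  obtain ⟨v', hv', hle, hge⟩ := hv v hvS
  have hcl : closure (ball c ϱ) = closedBall c ϱ := closure_ball c hϱ.ne'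
  have hcU : closedBall c ϱ ⊆ U := fun z hz => hUU (hcW hz).1
  set w : ℂ → ℝ := fun z => v z + (δ • k) z with hw
  have hkh : HarmonicOnNhd (δ • k) (closedBall c ϱ) := fun z hz => (hk z hz).const_smul
  have hwS : SubH (ball c ϱ) w := (hvS.1.mono (ball_subset_closedBall.trans hcU)).add_harm
    (fun z hz => hkh z (ball_subset_closedBall hz))
  have hwc : ContinuousOn w (closedBall c ϱ) := (hvS.1.1.mono hcU).add hkh.continuousOn
  have hws : ∀ z ∈ sphere c ϱ, w z ≤ v' z := by
    intro z hz
    have hzc := sphere_subset_closedBall hz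
    simp only [hw, Pi.smul_apply, smul_eq_mul]
    by_cases hzr : z ∈ ball e r
    · have := hge z hzr
      have := mul_le_mul_of_nonneg_left (hk1 z hzc) hδ.le
      linarith
    · have := hle z (hcW hzc).1
      have := mul_le_mul_of_nonneg_left (hk0 z hz hzr) hδ.le
      linarith
  have hw1 : ∀ z ∈ ball c ϱ, w z ≤ 1 := by
    refine hwS.relaxed isOpen_ball ?_ subset_rfl ?_ (h := fun _ => 1) continuousOn_const
      (fun z _ => harmonicAt_const _) ?_
    · rw [hcl]; exact isCompact_closedBall _ _
    · rw [hcl]; exact hwc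
    · rw [frontier_ball c hϱ.ne']
      intro z hz
      exact (hws z hz).trans (hv'.2.1 z (hcW (sphere_subset_closedBall hz)).1)
  refine ⟨fun z => if z ∈ ball c ϱ then max (v' z) (w z) else v' z, ⟨?_, ?_, ?_⟩, ?_, ?_⟩
  · refine hv'.1.glue isOpen_ball hwS (hwc.mono ?_) ?_
    · rw [hcl]; exact inter_subset_right
    · rw [frontier_ball c hϱ.ne']; exact fun z hz => hws z hz.2
  · intro z hz
    beta_reduce
    split_ifs with h
    · exact max_le (hv'.2.1 z hz) (hw1 z h)
    · exact hv'.2.1 z hz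
  · intro z hz
    beta_reduce
    rw [if_neg (fun h => (hcW (ball_subset_closedBall h)).2 hz)]
    exact hv'.2.2 z hz
  · intro z hz
    beta_reduce
    split_ifs
    · exact (hle z hz).trans (le_max_left _ _)
    · exact hle z hz
  · intro z hz
    beta_reduce
    rw [if_pos (hb' z hz).2]
    refine le_trans ?_ (le_max_right _ _)
    simp only [hw, Pi.smul_apply, smul_eq_mul]
    have := mul_le_mul_of_nonneg_left (hb' z hz).1.le hδ.le
    linarith

open Classical in
theorem diffG_start {K U U' : Set ℂ} (hU'o : IsOpen U') (hU's : IsSimplyConnected U')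
    (hUU : U' ⊆ U) {q : ℂ} (hqU' : q ∉ U') (hqc : q ∈ closure U')
    (hq : q ∈ negG (U \ K) (SS K U)) : (diffG K U U').Nonempty := by
  obtain ⟨δ, hδ, r0, hr0, hb, hv⟩ := hq
  obtain ⟨ξ, hξc, hξ⟩ := Complex.exists_continuousOn_pow_eq hU's hU'o (g := fun z => z - q)
    (by fun_prop) (by rintro ⟨z, hz, h⟩; exact hqU' (sub_eq_zero.1 h ▸ hz)) (n := 2) two_ne_zero
  have hne : ∀ z ∈ U', z - q ≠ 0 := fun z hz h => hqU' (sub_eq_zero.1 h ▸ hz)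
  have hξd : DifferentiableOn ℂ ξ U' := fun z hz =>
    (root_diffAt two_ne_zero (hξc.continuousAt (hU'o.mem_nhds hz))
      (G := fun z => z - q) (Eventually.of_forall hξ) (by fun_prop) (hne z hz)).differentiableWithinAt
  have hξn : ∀ z, ‖ξ z‖ = √ ‖z - q‖ := fun z => by
    rw [← hξ z, norm_pow, Real.sqrt_sq (norm_nonneg _)]
  obtain ⟨z1, hz1, hd1⟩ := Metric.mem_closure_iff.1 hqc r0 hr0
  set r := ‖z1 - q‖ with hr
  have hrp : 0 < r := norm_pos_iff.2 (hne z1 hz1)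
  have hrr0 : r < r0 := by rw [hr, ← dist_eq_norm, dist_comm]; exact hd1
  have hsub : closedBall q r ⊆ ball q r0 := closedBall_subset_ball hrr0
  -- open mapping at z1
  have hopen : ξ '' U' ∈ 𝓝 (ξ z1) := by
    have hin : DifferentiableAt ℂ ξ z1 := hξd.differentiableAt (hU'o.mem_nhds hz1)
    have han : AnalyticAt ℂ ξ z1 := hξd.analyticAt (hU'o.mem_nhds hz1)
    rcases han.eventually_constant_or_nhds_le_map_nhds with h | h
    · exfalso
      have h2 : (fun z => z - q) =ᶠ[𝓝 z1] fun _ => z1 - q := by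
        filter_upwards [h] with y hy
        rw [← hξ, ← hξ, hy]
      have := h2.deriv_eq
      simp at this
    · exact h (image_mem_map (hU'o.mem_nhds hz1))
  obtain ⟨r2, hr2, hb2⟩ := Metric.mem_nhds_iff.1 hopen
  have hmiss : ∀ x ∈ U', ξ x ∉ ball (-ξ z1) r2 := by
    intro x hx hmem
    have : -ξ x ∈ ball (ξ z1) r2 := by
      rw [mem_ball, dist_eq_norm] at hmem ⊢
      rw [show -ξ x - ξ z1 = -(ξ x - -ξ z1) by ring, norm_neg]; exact hmem
    obtain ⟨x', hx', h⟩ := hb2 this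
    have e : x' - q = x - q := by rw [← hξ, ← hξ, h]; ring
    have e' : x' = x := by linear_combination e
    rw [e'] at h
    have h0 : ξ x = 0 := by
      have : 2 * ξ x = 0 := by linear_combination h
      simpa using this
    have := hξ x
    rw [h0] at this
    exact hne x hx (by rw [← this]; norm_num)
  have hsq : 0 < √r := Real.sqrt_pos.2 hrp
  obtain ⟨k, hk, hk1, hk0, hkc⟩ := ker_exists 0 hsq (e := -ξ z1)
    (by simp [hξn, hr]) hr2
  have hξcl : ∀ z, ‖z - q‖ ≤ r → ξ z ∈ closedBall 0 (√r) := by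
    intro z hz
    rw [mem_closedBall, dist_zero_right, hξn]; exact Real.sqrt_le_sqrt hz
  have hkcont : ContinuousAt k 0 :=
    hk.continuousOn.continuousAt (closedBall_mem_nhds 0 hsq)
  obtain ⟨η, hη, hbη⟩ := Metric.eventually_nhds_iff_ball.1
    (hkcont.eventually (lt_mem_nhds (by linarith : k 0 / 2 < k 0)))
  obtain ⟨z2, hz2, hd2⟩ := Metric.mem_closure_iff.1 hqc (min r (η^2)) (by positivity)
  have hO2 : IsOpen (U' ∩ ball q (min r (η^2))) := hU'o.inter isOpen_ball
  obtain ⟨r3, hr3, hb3⟩ := Metric.isOpen_iff.1 hO2 z2 ⟨hz2, by rwa [mem_ball, dist_comm]⟩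
  set O := U' ∩ ball q r with hO
  have hOo : IsOpen O := hU'o.inter isOpen_ball
  have hOb : ball z2 r3 ⊆ O := fun z hz =>
    ⟨(hb3 hz).1, ball_subset_ball (min_le_left _ _) (hb3 hz).2⟩
  have hOK : ∀ z ∈ O, z ∉ K := fun z hz => (hb (hsub (ball_subset_closedBall hz.2))).2
  refine ⟨z2, δ * (k 0 / 2), by positivity, r3, hr3, 
    fun z hz => ⟨(hOb hz).1, hOK z (hOb hz)⟩, fun v hvS => ?_⟩
  have hclO : closure O ⊆ closedBall q r :=
    closure_minimal (fun z hz => ball_subset_closedBall hz.2) isClosed_closedBall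
  set w : ℂ → ℝ := fun z => v z + δ * k (ξ z) with hw
  have hwS : SubH O w := by
    refine (hvS.1.mono (fun z hz => hUU hz.1)).add_harm ?_
    intro z hz
    have hzm : ξ z ∈ closedBall 0 (√r) := hξcl z (by
      rw [← dist_eq_norm]; exact (mem_ball.1 hz.2).le)
    have h1 : HarmonicAt (fun x => k (ξ x)) z :=
      harm_comp (hk _ hzm) (hξd.analyticAt (hU'o.mem_nhds hz.1))
    exact h1.const_smul (c := δ)
  have hwc : ContinuousOn w (U' ∩ closure O) := by
    refine (hvS.1.1.mono (fun z hz => hUU hz.1)).add (continuousOn_const.mul ?_)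
    refine hk.continuousOn.comp (hξc.mono inter_subset_left) ?_
    intro z hz
    exact hξcl z (by rw [← dist_eq_norm]; exact hclO hz.2)
  refine ⟨fun z => if z ∈ O then max (v z) (w z) else v z, ⟨?_, ?_, ?_⟩, ?_, ?_⟩
  · have hgl := (hvS.1.mono hUU).glue hOo hwS hwc ?_
    · convert hgl
    rintro z ⟨hzU, hzf⟩
    rw [hOo.frontier_eq] at hzf
    have h1 : ‖z - q‖ ≤ r := by rw [← dist_eq_norm]; exact hclO hzf.1
    have h2 : r ≤ ‖z - q‖ := by
      rw [← dist_eq_norm]; by_contra h; push Not at h; exact hzf.2 ⟨hzU, h⟩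
    have h3 : ‖z - q‖ = r := le_antisymm h1 h2
    have := hk0 (ξ z) (by simp [hξn, h3]) (hmiss z hzU)
    have := mul_le_mul_of_nonneg_left this hδ.le
    simp only [hw]; linarith
  · intro z hz
    beta_reduce
    split_ifs with h
    · refine max_le (hvS.2.1 z (hUU hz)) ?_
      have hzb := ball_subset_closedBall h.2
      have a1 := hv v hvS z (hsub hzb)
      have a2 := mul_le_mul_of_nonneg_left (hk1 _ (hξcl z (by
        rw [← dist_eq_norm]; exact hzb))) hδ.le
      simp only [hw]; linarith
    · exact hvS.2.1 z (hUU hz)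
  · intro z hz
    beta_reduce
    rw [if_neg (fun h => hOK z h hz)]
    exact hvS.2.2 z hz
  · intro z hz
    beta_reduce
    split_ifs
    · exact le_max_left _ _
    · exact le_rfl
  · intro z hz
    beta_reduce
    rw [if_pos (hOb hz)]
    refine le_trans ?_ (le_max_right _ _)
    simp only [hw]
    have h1 : ξ z ∈ ball 0 η := by
      rw [mem_ball, dist_zero_right, hξn, Real.sqrt_lt' hη, ← dist_eq_norm]
      exact lt_of_lt_of_le (hb3 hz).2 (min_le_right _ _)
    have := mul_le_mul_of_nonneg_left (hbη _ h1).le hδ.le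
    linarith

theorem analytic_open {U U' : Set ℂ} {g : ℂ → ℂ} (hU'o : IsOpen U') (hU'c : IsPreconnected U')
    (hUo : IsOpen U) (hUne : U.Nonempty)
    (hg : DifferentiableOn ℂ g U') (hsurj : ∀ w ∈ U, (U' ∩ g ⁻¹' {w}).Nonempty) :
    ∀ z ∈ U', 𝓝 (g z) ≤ Filter.map g (𝓝 z) := by
  intro z hz
  have han := hg.analyticOnNhd hU'o
  rcases (han z hz).eventually_constant_or_nhds_le_map_nhds with h | h
  · exfalso
    have hc : EqOn g (fun _ => g z) U' :=
      han.eqOn_of_preconnected_of_eventuallyEq analyticOnNhd_const hU'c hz h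
    obtain ⟨w, hw⟩ := hUne
    have hUs : U ⊆ {g z} := by
      intro y hy
      obtain ⟨x, hx, hxy⟩ := hsurj y hy
      exact (show g x = y from hxy).symm.trans (hc hx)
    have : (interior ({g z} : Set ℂ)) = ∅ := interior_singleton _
    have h2 := interior_maximal hUs hUo hw
    rw [this] at h2; exact h2
  · exact h

theorem main_of_neg {g : ℂ → ℂ} {U' U : Set ℂ} {d : ℕ}
    (H : PLSetting g U' U d) {K : Set ℂ} (hKcomp : IsCompact K) (hKfull : IsConnected Kᶜ)
    (hKinv : U' ∩ g ⁻¹' K = K) (hneg : ((U \ K) ∩ negG (U \ K) (SS K U)).Nonempty) (p : ℕ) (a : ℂ)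
    (hp : 1 ≤ p) (ha : a ∉ K) (hk : ∀ k < p, g^[k] a ∈ U') (hper : g^[p] a = a) : False := by
  have hKU' : K ⊆ U' := by rw [← hKinv]; exact inter_subset_left
  have hKU : K ⊆ U := hKU'.trans H.subset
  have hU'o := H.disk'.1
  have hUo := H.disk.1
  have hUK : IsPreconnected (U \ K) :=
    diff_connected hUo H.disk.2.1.isPreconnected hKcomp hKU hKfull.isPreconnected
  have hU'K : IsPreconnected (U' \ K) :=
    diff_connected hU'o H.disk'.2.1.isPreconnected hKcomp hKU' hKfull.isPreconnected
  have hUKG : U \ K ⊆ negG (U \ K) (SS K U) := by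
    refine clopen_prop (hUo.sdiff hKcomp.isClosed) (negG_open _ _) ?_ hUK subset_rfl hneg
    intro c ϱ hϱ hc e he heG
    exact negG_prop (fun v hv => hv.1.mono sdiff_subset) (fun v hv z hz => hv.2.1 z hz.1)
      c ϱ hϱ hc e he heG
  obtain ⟨q, hqU, hqU', hqc⟩ : ∃ q ∈ U, q ∉ U' ∧ q ∈ closure U' := by
    by_contra hcon
    push Not at hcon
    obtain ⟨z0, hz0⟩ := H.disk'.2.1.nonempty
    have : U ⊆ U' := H.disk.2.1.isPreconnected.subset_of_closure_inter_subset hU'o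
      ⟨z0, H.subset hz0, hz0⟩ (fun z hz => by
        by_contra h; exact hcon z hz.2 h hz.1)
    exact H.ne (H.subset.antisymm this)
  have hst := diffG_start hU'o H.disk'.2.2 H.subset hqU' hqc
    (hUKG ⟨hqU, fun h => hqU' (hKU' h)⟩)
  have hall : U' \ K ⊆ diffG K U U' := by
    refine clopen_prop (hU'o.sdiff hKcomp.isClosed) (diffG_open _ _ _) 
      (diffG_prop H.subset) hU'K subset_rfl ?_
    obtain ⟨z, hz⟩ := hst
    obtain ⟨δ, hδ, r, hr, hb, -⟩ := id hz
    exact ⟨z, hb (mem_ball_self hr), hz⟩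
  have hopen := analytic_open hU'o H.disk'.2.1.isPreconnected hUo H.disk.2.1.nonempty H.holo H.deg.1
  have hstep : ∀ b ∈ U' \ K, ∃ δ > 0, ∀ v ∈ SS K U, ∃ w ∈ SS K U, v b + δ ≤ w (g b) := by
    intro b hb
    obtain ⟨δ, hδ, r, hr, -, h⟩ := hall hb
    refine ⟨δ, hδ, fun v hv => ?_⟩
    obtain ⟨v', hv', h1, h2⟩ := h v hv
    obtain ⟨w, hw, hw1, hw2⟩ := push_sub hUo hU'o H.holo H.mapsTo H.proper H.deg.1 hopen hv'.1
    refine ⟨w, ⟨hw, ?_, ?_⟩, (h2 b (mem_ball_self hr)).trans (hw1 b hb.1)⟩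
    · intro y hy
      obtain ⟨x, hx, -, e⟩ := hw2 y hy
      rw [e]; exact hv'.2.1 x hx
    · intro y hy
      obtain ⟨x, hx, hgx, e⟩ := hw2 y (hKU hy)
      rw [e]; apply hv'.2.2 x
      rw [← hKinv]; exact ⟨hx, by rw [mem_preimage, hgx]; exact hy⟩
  have hnK : ∀ k ≤ p, g^[k] a ∉ K := by
    intro k
    induction k with
    | zero => intro _; simpa using ha
    | succ n ih =>
      intro hn h
      apply ih (by omega)
      rw [← hKinv]
      exact ⟨hk n (by omega), by rw [mem_preimage, ← Function.iterate_succ_apply' g]; exact h⟩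
  obtain ⟨δ, hδ, hd⟩ := hstep a ⟨by simpa using hk 0 (by omega), ha⟩
  have hchain : ∀ k, k + 1 ≤ p → ∀ v ∈ SS K U, ∃ w ∈ SS K U, v a + δ ≤ w (g^[k+1] a) := by
    intro k
    induction k with
    | zero => intro _ v hv; simpa using hd v hv
    | succ n ih =>
      intro hn v hv
      obtain ⟨w, hw, h1⟩ := ih (by omega) v hv
      obtain ⟨δ', hδ', h2⟩ := hstep (g^[n+1] a) ⟨hk _ (by omega), hnK _ (by omega)⟩
      obtain ⟨w', hw', h3⟩ := h2 w hw
      refine ⟨w', hw', ?_⟩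
      rw [Function.iterate_succ_apply']
      linarith
  have hcyc : ∀ v ∈ SS K U, ∃ w ∈ SS K U, v a + δ ≤ w a := by
    intro v hv
    obtain ⟨w, hw, h⟩ := hchain (p-1) (by omega) v hv
    rw [show p - 1 + 1 = p by omega, hper] at h
    exact ⟨w, hw, h⟩
  have hn : ∀ n : ℕ, ∃ v ∈ SS K U, n * δ ≤ v a := by
    intro n
    induction n with
    | zero =>
      exact ⟨fun _ => 0, ⟨SubH.of_harm (fun z _ => harmonicAt_const _), by simp, by simp⟩, by simp⟩
    | succ n ih =>
      obtain ⟨v, hv, h⟩ := ih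
      obtain ⟨w, hw, h'⟩ := hcyc v hv
      refine ⟨w, hw, ?_⟩
      push_cast; linarith
  obtain ⟨n, hn'⟩ := exists_nat_gt (1 / δ)
  obtain ⟨v, hv, h⟩ := hn n
  have := hv.2.1 a (H.subset (by simpa using hk 0 (by omega)))
  rw [div_lt_iff₀ hδ] at hn'
  linarith

theorem div_lemma {U' : Set ℂ} (hU'o : IsOpen U') {f : ℂ → ℂ} (hf : DifferentiableOn ℂ f U')
    (s : Finset ℂ) (hs : ∀ x ∈ s, x ∈ U' ∧ f x = 0) :
    ∃ e : ℂ → ℂ, DifferentiableOn ℂ e U' ∧ ∀ z, f z = (∏ x ∈ s, (z - x)) * e z := by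
  classical
  induction s using Finset.induction_on with
  | empty => exact ⟨f, hf, by simp⟩
  | insert a s ha ih =>
    obtain ⟨e, he, hfe⟩ := ih (fun x hx => hs x (Finset.mem_insert_of_mem hx))
    have haU := hs a (Finset.mem_insert_self a s)
    have hea : e a = 0 := by
      have h1 := hfe a
      rw [haU.2] at h1
      have h2 : ∏ x ∈ s, (a - x) ≠ 0 := by
        rw [Finset.prod_ne_zero_iff]
        intro x hx h
        rw [sub_eq_zero] at h
        exact ha (h ▸ hx)
      rcases mul_eq_zero.1 h1.symm with h | h
      · exact absurd h h2
      · exact h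
    refine ⟨dslope e a, (Complex.differentiableOn_dslope (hU'o.mem_nhds haU.1)).2 he, ?_⟩
    intro z
    rw [Finset.prod_insert ha, hfe z]
    have := sub_smul_dslope e a z
    rw [hea, sub_zero, smul_eq_mul] at this
    rw [← this]; ring

theorem crit_finite {U' K : Set ℂ} {g : ℂ → ℂ} (hU'o : IsOpen U') (hU'c : IsPreconnected U')
    (hg : DifferentiableOn ℂ g U') (hK : IsCompact K) (hcK : critPts g U' ⊆ K) (hKU' : K ⊆ U')
    (hopen : ∀ z ∈ U', 𝓝 (g z) ≤ Filter.map g (𝓝 z)) : (critPts g U').Finite := by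
  by_contra hinf
  obtain ⟨x, hxK, hx⟩ := Set.Infinite.exists_accPt_of_subset_isCompact hinf hK hcK
  have hxU := hKU' hxK
  have han : AnalyticOnNhd ℂ (deriv g) U' := (hg.analyticOnNhd hU'o).deriv
  have h0 : EqOn (deriv g) 0 U' := by
    refine han.eqOn_zero_of_preconnected_of_frequently_eq_zero hU'c hxU ?_
    rw [accPt_iff_frequently_nhdsNE] at hx
    exact hx.mono (fun y hy => hy.2)
  have hc : ∀ᶠ y in 𝓝 x, g y = g x := by
    obtain ⟨R, hR, hRU⟩ := Metric.isOpen_iff.1 hU'o x hxU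
    filter_upwards [ball_mem_nhds x hR] with y hy
    exact isOpen_ball.is_const_of_deriv_eq_zero (convex_ball x R).isPreconnected
      (hg.mono hRU) (fun z hz => h0 (hRU hz)) hy (mem_ball_self hR)
  have h1 : {g x} ∈ 𝓝 (g x) := hopen x hxU hc
  rw [_root_.mem_nhds_iff] at h1
  obtain ⟨t, ht, hto, hxt⟩ := h1
  have := interior_maximal ht hto hxt
  rw [interior_singleton] at this
  exact this

/-- Uniform factorisation of `g - w` near `K`. -/
theorem lemmaA {g : ℂ → ℂ} {U' U : Set ℂ} {d : ℕ} (H : PLSetting g U' U d) {K : Set ℂ}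
    (hKcomp : IsCompact K) (hKne : K.Nonempty)
    (hKinv : U' ∩ g ⁻¹' K = K) (hfin : (critPts g U').Finite) :
    ∃ C ρ : ℝ, 1 ≤ C ∧ 0 < ρ ∧ cthickening ρ K ⊆ U' ∧ ∀ w ∈ K, ∃ x : Fin d → ℂ,
      (∀ i, x i ∈ K ∧ g (x i) = w) ∧ ∀ z ∈ thickening ρ K,
        ‖g z - w‖ ≤ C * ∏ i, ‖z - x i‖ ∧ ∏ i, ‖z - x i‖ ≤ C * ‖g z - w‖ := by
  have hKU' : K ⊆ U' := by rw [← hKinv]; exact inter_subset_left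
  have hKU : K ⊆ U := hKU'.trans H.subset
  have hU'o := H.disk'.1
  have hUo := H.disk.1
  obtain ⟨ρ, hρ, hρU⟩ := hKcomp.exists_cthickening_subset_open hU'o hKU'
  obtain ⟨η0, hη0, hη0U⟩ := hKcomp.exists_cthickening_subset_open hUo hKU
  have hgc := H.holo.continuousOn
  -- lower bound for `infDist (g z) K`
  obtain ⟨m, hm, hmb⟩ : ∃ m > 0, ∀ z ∈ U', z ∉ thickening (ρ/2) K → m ≤ infDist (g z) K := by
    set P := (U' ∩ g ⁻¹' (cthickening η0 K)) \ thickening (ρ/2) K with hP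
    have hPc : IsCompact P := (H.proper _ hη0U hKcomp.cthickening).diff isOpen_thickening
    have hPm : ∀ z ∈ P, 0 < infDist (g z) K := by
      intro z hz
      rw [← hKcomp.isClosed.notMem_iff_infDist_pos hKne]
      intro h
      apply hz.2
      apply self_subset_thickening (by positivity) K
      rw [← hKinv]; exact ⟨hz.1.1, h⟩
    rcases P.eq_empty_or_nonempty with he | hne
    · refine ⟨η0, hη0, fun z hz hzt => ?_⟩
      by_contra hlt
      push Not at hlt
      have : z ∈ P := ⟨⟨hz, by
        rw [mem_preimage, hKcomp.isClosed.cthickening_eq_biUnion_closedBall hη0.le] ;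
        obtain ⟨y, hy, hd⟩ := (infDist_lt_iff hKne).1 hlt
        exact mem_biUnion hy hd.le⟩, hzt⟩
      rw [he] at this; exact this
    · obtain ⟨z0, hz0, hmin⟩ := hPc.exists_isMinOn hne
        ((continuous_infDist_pt K).comp_continuousOn (hgc.mono (fun z hz => hz.1.1)))
      refine ⟨min η0 (infDist (g z0) K), lt_min hη0 (hPm z0 hz0), fun z hz hzt => ?_⟩
      by_contra hlt
      push Not at hlt
      obtain ⟨hlt1, hlt2⟩ := lt_min_iff.1 hlt
      have : z ∈ P := ⟨⟨hz, by
        rw [mem_preimage, hKcomp.isClosed.cthickening_eq_biUnion_closedBall hη0.le] ;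
        obtain ⟨y, hy, hd⟩ := (infDist_lt_iff hKne).1 hlt1
        exact mem_biUnion hy hd.le⟩, hzt⟩
      have := hmin this
      simp only [mem_ofPred_eq, Function.comp] at this
      linarith
  set T := thickening ρ K with hT
  have hTo : IsOpen T := isOpen_thickening
  have hTcl : closure T ⊆ cthickening ρ K := closure_thickening_subset_cthickening ρ K
  have hTclU : closure T ⊆ U' := hTcl.trans hρU
  have hctc : IsCompact (cthickening ρ K) := hKcomp.cthickening
  have hTb : Bornology.IsBounded T := hctc.isBounded.subset (thickening_subset_cthickening ρ K)
  have hTclc : IsCompact (closure T) := hctc.of_isClosed_subset isClosed_closure hTcl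
  set η := m / 2 with hη
  have hηp : 0 < η := by positivity
  -- bound on |g| and D
  obtain ⟨M0, hM0⟩ := (hTclc.image_of_continuousOn (hgc.mono hTclU)).isBounded.exists_norm_le
  obtain ⟨D0, hD0⟩ := hctc.isBounded.exists_norm_le
  obtain ⟨M2, hM2⟩ := hKcomp.isBounded.exists_norm_le
  set D := max 1 (2 * D0) with hD
  have hD1 : 1 ≤ D := le_max_left _ _
  set M := max 1 (M0 + (M2 + η)) with hM
  have hM1 : 1 ≤ M := le_max_left _ _
  set C := max 1 (max (M / (ρ/2)^d) (D^d / η)) with hC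
  have hC1 : 1 ≤ C := le_max_left _ _
  have hCa : M / (ρ/2)^d ≤ C := (le_max_left _ _).trans (le_max_right _ _)
  have hCb : D^d / η ≤ C := (le_max_right _ _).trans (le_max_right _ _)
  -- noncritical values
  have hnc : ∀ w ∈ U, infDist w K < η → w ∉ g '' critPts g U' → ∃ x : Fin d → ℂ,
      (∀ i, x i ∈ thickening (ρ/2) K) ∧ ∀ z ∈ T,
        ‖g z - w‖ ≤ C * ∏ i, ‖z - x i‖ ∧ ∏ i, ‖z - x i‖ ≤ C * ‖g z - w‖ := by
    intro w hwU hwK hwc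
    have hcard := H.deg.2 w hwU hwc
    have hd2 := H.two_le_d
    have hff : (U' ∩ g ⁻¹' {w}).Finite := Set.finite_of_ncard_ne_zero (by omega)
    set s := hff.toFinset with hs
    have hsc : s.card = d := by rw [← hcard, Set.ncard_eq_toFinset_card _ hff]
    have hmem : ∀ x, x ∈ s ↔ x ∈ U' ∧ g x = w := by
      intro x; rw [hs, Set.Finite.mem_toFinset]; rfl
    obtain ⟨e, hed, hfe⟩ := div_lemma hU'o (f := fun z => g z - w) (H.holo.sub_const w) s
      (fun x hx => ⟨((hmem x).1 hx).1, by rw [((hmem x).1 hx).2, sub_self]⟩)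
    have hst : ∀ x ∈ s, x ∈ thickening (ρ/2) K := by
      intro x hx
      by_contra h
      have := hmb x ((hmem x).1 hx).1 h
      rw [((hmem x).1 hx).2] at this
      linarith
    have he0 : ∀ z ∈ U', e z ≠ 0 := by
      intro z hz h0
      have hfz := hfe z
      rw [h0, mul_zero, sub_eq_zero] at hfz
      have hzs : z ∈ s := (hmem z).2 ⟨hz, hfz⟩
      apply hwc
      refine ⟨z, ⟨hz, ?_⟩, hfz⟩
      have hp : HasDerivAt (fun z => ∏ x ∈ s, (z - x)) (deriv (fun z => ∏ x ∈ s, (z - x)) z) z :=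
        DifferentiableAt.hasDerivAt (by fun_prop)
      have he := (hed.differentiableAt (hU'o.mem_nhds hz)).hasDerivAt
      have h1 := hp.mul he
      rw [h0, Finset.prod_eq_zero hzs (sub_self z), mul_zero, zero_mul, add_zero] at h1
      have h2 : HasDerivAt (fun z => g z - w) 0 z :=
        h1.congr_of_eventuallyEq (Eventually.of_forall hfe)
      have h3 := h2.add_const w
      simpa using h3.deriv
    have hfrT : ∀ z ∈ frontier T, z ∈ U' ∧ z ∉ T ∧ z ∈ closure T := by
      intro z hz
      rw [hTo.frontier_eq] at hz
      exact ⟨hTclU hz.1, hz.2, hz.1⟩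
    have hfrx : ∀ z ∈ frontier T, ∀ x ∈ s, ρ/2 ≤ ‖z - x‖ ∧ ‖z - x‖ ≤ D := by
      intro z hz x hx
      obtain ⟨h1, h2, h3⟩ := hfrT z hz
      constructor
      · by_contra hlt
        push Not at hlt
        apply h2
        obtain ⟨y, hy, hd⟩ := mem_thickening_iff.1 (hst x hx)
        rw [hT, mem_thickening_iff]
        refine ⟨y, hy, ?_⟩
        have := dist_triangle z x y
        rw [dist_eq_norm z x] at this
        linarith
      · have a1 := hD0 z (hTcl h3)
        have a2 := hD0 x (thickening_subset_cthickening_of_le (by linarith) K (hst x hx))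
        have a3 := norm_sub_le z x
        have : 2 * D0 ≤ D := le_max_right _ _
        linarith
    have hfrg : ∀ z ∈ frontier T, η ≤ ‖g z - w‖ ∧ ‖g z - w‖ ≤ M := by
      intro z hz
      obtain ⟨h1, h2, h3⟩ := hfrT z hz
      constructor
      · have a1 := hmb z h1 (fun h => h2 (thickening_mono (by linarith) K h))
        have a2 : infDist (g z) K ≤ infDist w K + dist (g z) w := infDist_le_infDist_add_dist
        rw [dist_eq_norm] at a2
        linarith
      · have a1 := hM0 (g z) (mem_image_of_mem g h3)
        obtain ⟨y, hy, hd⟩ := (infDist_lt_iff hKne).1 hwK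
        have a2 := hM2 y hy
        have a3 : ‖w‖ ≤ ‖y‖ + ‖w - y‖ := by
          have := norm_add_le y (w - y); simpa using this
        rw [dist_eq_norm] at hd
        have a4 := norm_sub_le (g z) w
        have : M0 + (M2 + η) ≤ M := le_max_right _ _
        linarith
    have hnorm : ∀ z, ‖g z - w‖ = (∏ x ∈ s, ‖z - x‖) * ‖e z‖ := by
      intro z
      rw [hfe z, norm_mul, norm_prod]
    have hprodlo : ∀ z ∈ frontier T, (ρ/2)^d ≤ ∏ x ∈ s, ‖z - x‖ := by
      intro z hz
      rw [← hsc, ← Finset.prod_const]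
      exact Finset.prod_le_prod (fun _ _ => by positivity) (fun x hx => (hfrx z hz x hx).1)
    have hprodhi : ∀ z ∈ frontier T, ∏ x ∈ s, ‖z - x‖ ≤ D^d := by
      intro z hz
      rw [← hsc, ← Finset.prod_const]
      exact Finset.prod_le_prod (fun _ _ => by positivity) (fun x hx => (hfrx z hz x hx).2)
    have hfre : ∀ z ∈ frontier T, ‖e z‖ ≤ C ∧ ‖(e z)⁻¹‖ ≤ C := by
      intro z hz
      have h1 := hnorm z
      have h2 := hprodlo z hz
      have h3 := hprodhi z hz
      obtain ⟨h4, h5⟩ := hfrg z hz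
      have hpos : 0 < ∏ x ∈ s, ‖z - x‖ := lt_of_lt_of_le (by positivity) h2
      have hepos : 0 < ‖e z‖ := norm_pos_iff.2 (he0 z (hfrT z hz).1)
      constructor
      · refine le_trans ?_ hCa
        rw [le_div_iff₀ (by positivity)]
        calc ‖e z‖ * (ρ/2)^d ≤ ‖e z‖ * ∏ x ∈ s, ‖z - x‖ := by gcongr
          _ = ‖g z - w‖ := by rw [h1]; ring
          _ ≤ M := h5
      · refine le_trans ?_ hCb
        rw [norm_inv, le_div_iff₀ hηp, inv_mul_le_iff₀ hepos]
        calc η ≤ ‖g z - w‖ := h4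
          _ = ‖e z‖ * ∏ x ∈ s, ‖z - x‖ := by rw [h1]; ring
          _ ≤ ‖e z‖ * D^d := by gcongr
    have hTe : ∀ z ∈ T, ‖e z‖ ≤ C ∧ ‖(e z)⁻¹‖ ≤ C := by
      intro z hz
      constructor
      · exact Complex.norm_le_of_forall_mem_frontier_norm_le hTb
          (hed.mono hTclU).diffContOnCl (fun y hy => (hfre y hy).1) (subset_closure hz)
      · exact Complex.norm_le_of_forall_mem_frontier_norm_le hTb (f := fun z => (e z)⁻¹)
          ((hed.mono hTclU).inv (fun y hy => he0 y (hTclU hy))).diffContOnCl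
          (fun y hy => (hfre y hy).2) (subset_closure hz)
    let φ := s.equivFinOfCardEq hsc
    refine ⟨fun i => (φ.symm i : ℂ), fun i => hst _ (φ.symm i).2, ?_⟩
    intro z hz
    have hpr : ∏ i, ‖z - (φ.symm i : ℂ)‖ = ∏ x ∈ s, ‖z - x‖ := by
      rw [Equiv.prod_comp φ.symm (fun x : s => ‖z - (x:ℂ)‖), Finset.prod_coe_sort s (fun x => ‖z - x‖)]
    rw [hpr, hnorm z]
    have hpn : 0 ≤ ∏ x ∈ s, ‖z - x‖ := by positivity
    obtain ⟨h1, h2⟩ := hTe z hz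
    constructor
    · rw [mul_comm C]; gcongr
    · have hepos : 0 < ‖e z‖ := norm_pos_iff.2 (he0 z (hTclU (subset_closure hz)))
      rw [norm_inv, inv_le_iff_one_le_mul₀ hepos] at h2
      nlinarith
  refine ⟨C, ρ, hC1, hρ, hρU, fun w hw => ?_⟩
  -- approximating sequence
  have hcv : (g '' critPts g U').Finite := hfin.image g
  have hseq : ∀ n : ℕ, ∃ w', dist w' w < 1 / ((n:ℝ) + 1) ∧ w' ∈ U ∧ infDist w' K < η ∧
      w' ∉ g '' critPts g U' := by
    intro n
    have h1 : ∀ᶠ w' in 𝓝 w, dist w' w < 1 / ((n:ℝ) + 1) ∧ w' ∈ U ∧ infDist w' K < η := by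
      have h3 : ∀ᶠ w' in 𝓝 w, infDist w' K < η := by
        refine (continuous_infDist_pt K).continuousAt.eventually (gt_mem_nhds ?_)
        simpa only [infDist_zero_of_mem hw] using hηp
      filter_upwards [ball_mem_nhds w (by positivity : 0 < 1 / ((n:ℝ) + 1)), hUo.mem_nhds (hKU hw), h3]
        with y hy1 hy2 hy3
      exact ⟨hy1, hy2, hy3⟩
    have h2 : ∀ᶠ w' in 𝓝[≠] w, w' ∉ g '' critPts g U' := by
      have := (hcv.subset (sdiff_subset (t := {w}))).isClosed.isOpen_compl.mem_nhds
        (fun h => h.2 rfl : w ∈ (g '' critPts g U' \ {w})ᶜ)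
      filter_upwards [mem_nhdsWithin_of_mem_nhds this, self_mem_nhdsWithin] with y hy hy2 hy3
      exact hy ⟨hy3, hy2⟩
    obtain ⟨w', h3, h4⟩ := ((h1.filter_mono nhdsWithin_le_nhds).and h2).exists
    exact ⟨w', h3.1, h3.2.1, h3.2.2, h4⟩
  choose ws hws1 hws2 hws3 hws4 using hseq
  choose xs hxs1 hxs2 using fun n => hnc (ws n) (hws2 n) (hws3 n) (hws4 n)
  have hwlim : Tendsto ws atTop (𝓝 w) := by
    rw [tendsto_iff_dist_tendsto_zero]
    exact squeeze_zero (fun _ => dist_nonneg) (fun n => (hws1 n).le) tendsto_one_div_add_atTop_nhds_zero_nat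
  have hcpt : IsCompact (Set.pi univ (fun _ : Fin d => cthickening (ρ/2) K)) :=
    isCompact_univ_pi (fun _ => hKcomp.cthickening)
  obtain ⟨x, hx, ψ, hψ, hlim⟩ := hcpt.tendsto_subseq (x := xs)
    (fun n i _ => thickening_subset_cthickening _ _ (hxs1 n i))
  have hxlim : ∀ i, Tendsto (fun n => xs (ψ n) i) atTop (𝓝 (x i)) := fun i =>
    (tendsto_pi_nhds.1 hlim) i
  have hwl : Tendsto (fun n => ws (ψ n)) atTop (𝓝 w) := hwlim.comp hψ.tendsto_atTop
  have hineq : ∀ z ∈ T, ‖g z - w‖ ≤ C * ∏ i, ‖z - x i‖ ∧ ∏ i, ‖z - x i‖ ≤ C * ‖g z - w‖ := by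
    intro z hz
    have t1 : Tendsto (fun n => ‖g z - ws (ψ n)‖) atTop (𝓝 ‖g z - w‖) :=
      (tendsto_const_nhds.sub hwl).norm
    have t2 : Tendsto (fun n => ∏ i, ‖z - xs (ψ n) i‖) atTop (𝓝 (∏ i, ‖z - x i‖)) :=
      tendsto_finsetProd _ (fun i _ => (tendsto_const_nhds.sub (hxlim i)).norm)
    exact ⟨le_of_tendsto_of_tendsto' t1 (t2.const_mul C) (fun n => (hxs2 (ψ n) z hz).1),
      le_of_tendsto_of_tendsto' t2 (t1.const_mul C) (fun n => (hxs2 (ψ n) z hz).2)⟩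
  refine ⟨x, fun i => ?_, hineq⟩
  have hxT : x i ∈ T := cthickening_subset_thickening' hρ (by linarith) K (hx i (mem_univ i))
  have h1 := (hineq (x i) hxT).1
  rw [Finset.prod_eq_zero (Finset.mem_univ i) (by simp), mul_zero] at h1
  have h2 : g (x i) = w := by
    rw [← sub_eq_zero, ← norm_eq_zero]; exact le_antisymm h1 (norm_nonneg _)
  refine ⟨?_, h2⟩
  rw [← hKinv]
  exact ⟨hρU (thickening_subset_cthickening _ _ hxT), by rw [mem_preimage, h2]; exact hw⟩

theorem crit_nonempty {g : ℂ → ℂ} {U' U : Set ℂ} {d : ℕ} (H : PLSetting g U' U d) :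
    (critPts g U').Nonempty := by
  by_contra hne
  rw [Set.not_nonempty_iff_eq_empty] at hne
  have hU'o := H.disk'.1
  have hUo := H.disk.1
  have hgc := H.holo.continuousOn
  let p : U' → U := fun z => ⟨g z, H.mapsTo z.2⟩
  have hpc : Continuous p := by
    refine Continuous.subtype_mk ?_ _
    exact continuousOn_iff_continuous_domRestrict.1 hgc
  have hcl : IsClosedMap p := by
    have : LocallyCompactSpace U := hUo.locallyCompactSpace
    refine IsProperMap.isClosedMap (isProperMap_iff_isCompact_preimage.2 ⟨hpc, fun Q hQ => ?_⟩)
    rw [Subtype.isCompact_iff]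
    have h1 := H.proper (Subtype.val '' Q) (by rintro _ ⟨x, _, rfl⟩; exact x.2)
      (hQ.image continuous_subtype_val)
    convert h1 using 1
    ext z
    constructor
    · rintro ⟨x, hx, rfl⟩
      exact ⟨x.2, ⟨p x, hx, rfl⟩⟩
    · rintro ⟨hz, x, hx, hxz⟩
      refine ⟨⟨z, hz⟩, ?_, rfl⟩
      have : p ⟨z, hz⟩ = x := Subtype.ext hxz.symm
      show p ⟨z, hz⟩ ∈ Q
      rw [this]; exact hx
  have hloc : IsLocalHomeomorph p := by
    have h1 : IsLocalHomeomorphOn g U' := by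
      refine IsLocalHomeomorphOn.mk _ _ fun z hz => ?_
      have hd : HasStrictDerivAt g (deriv g z) z :=
        (H.holo.analyticOnNhd hU'o z hz).hasStrictDerivAt
      have hd0 : deriv g z ≠ 0 := by
        intro h0
        have : z ∈ critPts g U' := ⟨hz, h0⟩
        rw [hne] at this
        exact this
      let R := (hd.hasStrictFDerivAt_equiv hd0).toOpenPartialHomeomorph g
      exact ⟨R, (hd.hasStrictFDerivAt_equiv hd0).mem_toOpenPartialHomeomorph_source,
        fun x _ => rfl⟩
    have h2 : IsLocalHomeomorph (Subtype.val : U → ℂ) :=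
      hUo.isOpenEmbedding_subtypeVal.isLocalHomeomorph
    have h3 : IsLocalHomeomorph (Subtype.val : U' → ℂ) :=
      hU'o.isOpenEmbedding_subtypeVal.isLocalHomeomorph
    refine IsLocalHomeomorph.of_comp (g := (Subtype.val : U → ℂ)) ?_ h2 hpc
    rw [isLocalHomeomorph_iff_isLocalHomeomorphOn_univ]
    exact h1.comp h3.isLocalHomeomorphOn (fun x _ => x.2)
  have hcard : ∀ w : U, (U' ∩ g ⁻¹' {(w:ℂ)}).ncard = d := by
    intro w
    refine H.deg.2 w w.2 ?_
    rw [hne]; simp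
  have hd2 := H.two_le_d
  have hcov : IsCoveringMap p := by
    rw [isCoveringMap_iff_isCoveringMapOn_univ]
    refine hcl.isCoveringMapOn_of_isLocalHomeomorphOn (fun w _ => ?_) ?_
    · have h1 : (U' ∩ g ⁻¹' {(w:ℂ)}).Finite := Set.finite_of_ncard_ne_zero (by rw [hcard]; omega)
      refine Set.Finite.of_finite_image (f := Subtype.val) (h1.subset ?_)
        Subtype.val_injective.injOn
      rintro _ ⟨x, hx, rfl⟩
      exact ⟨x.2, congrArg Subtype.val hx⟩
    · exact hloc.isLocalHomeomorphOn.mono (subset_univ _)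
  have : SimplyConnectedSpace U := H.disk.2.2
  have : LocallyPathConnectedSpace U := hUo.locallyPathConnectedSpace
  have : PreconnectedSpace U' := Subtype.preconnectedSpace H.disk'.2.1.isPreconnected
  obtain ⟨z0, hz0⟩ := H.disk'.2.1.nonempty
  obtain ⟨σ, ⟨hσ0, hσ⟩, -⟩ := hcov.existsUnique_continuousMap_lifts (ContinuousMap.id U)
    (p ⟨z0, hz0⟩) ⟨z0, hz0⟩ rfl
  have hinj : (σ ∘ p) = id := by
    refine hcov.eq_of_comp_eq (σ.continuous.comp hpc) continuous_id ?_ ⟨z0, hz0⟩ hσ0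
    funext x
    exact congrFun hσ (p x)
  have h1 := hcard (p ⟨z0, hz0⟩)
  have h2 : (U' ∩ g ⁻¹' {((p ⟨z0, hz0⟩ : U):ℂ)}).ncard ≤ 1 := by
    rw [Set.ncard_le_one_iff (Set.finite_of_ncard_ne_zero (by rw [hcard]; omega))]
    rintro a b ⟨ha, ha'⟩ ⟨hb, hb'⟩
    have h3 : p ⟨a, ha⟩ = p ⟨b, hb⟩ := Subtype.ext ((show g a = _ from ha').trans (show g b = _ from hb').symm)
    have h4 := congrFun hinj ⟨a, ha⟩
    have h5 := congrFun hinj ⟨b, hb⟩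
    simp only [comp_apply, id] at h4 h5
    rw [h3, h5] at h4
    exact (congrArg Subtype.val h4).symm
  omega

/-- The quotient `(g z - w) / (z - y)^d` as nonvanishing holomorphic function. -/
theorem quot_lemma {U' K : Set ℂ} {g : ℂ → ℂ} {d : ℕ} (hd : d ≠ 0) (hU'o : IsOpen U')
    (hg : DifferentiableOn ℂ g U')
    {C ρ : ℝ} (hC : 1 ≤ C) (hρ : 0 < ρ) (hρU : cthickening ρ K ⊆ U') {w y : ℂ}
    (hyK : y ∈ K) (hy : U' ∩ g ⁻¹' {w} = {y})
    (hb : ∀ z ∈ thickening ρ K, ‖g z - w‖ ≤ C * ‖z - y‖ ^ d ∧ ‖z - y‖ ^ d ≤ C * ‖g z - w‖) :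
    ∃ e : ℂ → ℂ, DifferentiableOn ℂ e U' ∧ (∀ z ∈ U', e z ≠ 0) ∧
      ∀ z ∈ U', g z - w = (z - y) ^ d * e z := by
  have hU : thickening ρ K ⊆ U' := (thickening_subset_cthickening ρ K).trans hρU
  have hyT : y ∈ thickening ρ K := self_subset_thickening hρ K hyK
  have hTn : thickening ρ K ∈ 𝓝 y := isOpen_thickening.mem_nhds hyT
  have hgy : g y = w := by
    have : y ∈ U' ∩ g ⁻¹' {w} := by rw [hy]; rfl
    exact this.2
  set f : ℂ → ℂ := fun z => (g z - w) / (z - y) ^ d with hf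
  have hfd : DifferentiableOn ℂ f (U' \ {y}) := by
    intro z hz
    have hzy : z - y ≠ 0 := sub_ne_zero.2 hz.2
    refine DifferentiableWithinAt.div ?_ ?_ (pow_ne_zero _ hzy)
    · exact ((hg z hz.1).mono sdiff_subset).sub_const w
    · exact ((differentiableWithinAt_id).sub_const y).pow d
  have hpos : ∀ z, z ≠ y → 0 < ‖z - y‖ ^ d := fun z hz => pow_pos (norm_pos_iff.2 (sub_ne_zero.2 hz)) d
  have hup : ∀ z ∈ thickening ρ K, z ≠ y → ‖f z‖ ≤ C := by
    intro z hz hzy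
    rw [hf]; simp only [norm_div, norm_pow]
    rw [div_le_iff₀ (hpos z hzy)]
    exact (hb z hz).1
  have hlo : ∀ z ∈ thickening ρ K, z ≠ y → 1 / C ≤ ‖f z‖ := by
    intro z hz hzy
    rw [hf]; simp only [norm_div, norm_pow]
    rw [div_le_div_iff₀ (by linarith) (hpos z hzy)]
    have := (hb z hz).2
    linarith
  have hrem := Complex.differentiableOn_update_limUnder_of_bddAbove (f := f) (s := thickening ρ K)
    (c := y) hTn (hfd.mono (sdiff_subset_sdiff_left hU)) (by
      refine ⟨C, ?_⟩
      rintro _ ⟨z, hz, rfl⟩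
      exact hup z hz.1 hz.2)
  set e := update f y (limUnder (𝓝[≠] y) f) with he
  have hey : ∀ z, z ≠ y → e z = f z := fun z hz => update_of_ne hz _ _
  have hed : DifferentiableOn ℂ e U' := by
    intro z hz
    by_cases hzy : z = y
    · subst hzy
      exact ((hrem z hyT).differentiableAt hTn).differentiableWithinAt
    · have h1 : U' \ {y} ∈ 𝓝 z := (hU'o.sdiff isClosed_singleton).mem_nhds ⟨hz, hzy⟩
      refine DifferentiableAt.differentiableWithinAt ?_
      refine ((hfd z ⟨hz, hzy⟩).differentiableAt h1).congr_of_eventuallyEq ?_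
      filter_upwards [h1] with x hx
      exact hey x hx.2
  refine ⟨e, hed, ?_, ?_⟩
  · intro z hz
    by_cases hzy : z = y
    · subst hzy
      have h1 : ContinuousAt e z := (hed z hz).continuousWithinAt.continuousAt (hU'o.mem_nhds hz)
      have h2 : Tendsto (fun x => ‖e x‖) (𝓝[≠] z) (𝓝 ‖e z‖) :=
        (h1.norm.tendsto).mono_left nhdsWithin_le_nhds
      have h3 : 1 / C ≤ ‖e z‖ := by
        refine ge_of_tendsto h2 ?_
        filter_upwards [mem_nhdsWithin_of_mem_nhds hTn, self_mem_nhdsWithin] with x hx hx'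
        rw [hey x hx']
        exact hlo x hx hx'
      intro h0
      rw [h0, norm_zero] at h3
      have : 0 < 1 / C := by positivity
      linarith
    · rw [hey z hzy, hf]
      refine div_ne_zero ?_ (pow_ne_zero _ (sub_ne_zero.2 hzy))
      intro h0
      have : z ∈ U' ∩ g ⁻¹' {w} := ⟨hz, sub_eq_zero.1 h0⟩
      rw [hy] at this
      exact hzy this
  · intro z hz
    by_cases hzy : z = y
    · subst hzy; simp [hgy, hd]
    · rw [hey z hzy, hf]
      field_simp [sub_ne_zero.2 hzy]

theorem rh {g : ℂ → ℂ} {U' U : Set ℂ} {d : ℕ} (H : PLSetting g U' U d) {K : Set ℂ}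
    (hKcomp : IsCompact K) (hKinv : U' ∩ g ⁻¹' K = K) (hcK : critPts g U' ⊆ K)
    (hfin : (critPts g U').Finite) {w y : ℂ} (hw : w ∈ K) (hy : U' ∩ g ⁻¹' {w} = {y}) :
    critPts g U' ⊆ {y} := by
  have hKU' : K ⊆ U' := by rw [← hKinv]; exact inter_subset_left
  have hU'o := H.disk'.1
  have hUo := H.disk.1
  have hgc := H.holo.continuousOn
  have hd2 := H.two_le_d
  have hd0 : d ≠ 0 := by omega
  have hopen := analytic_open hU'o H.disk'.2.1.isPreconnected hUo H.disk.2.1.nonempty H.holo H.deg.1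
  have hyU : y ∈ U' ∧ g y = w := by
    have : y ∈ U' ∩ g ⁻¹' {w} := by rw [hy]; rfl
    exact this
  have hyK : y ∈ K := by rw [← hKinv]; exact ⟨hyU.1, by rw [mem_preimage, hyU.2]; exact hw⟩
  obtain ⟨C, ρ, hC, hρ, hρU, hA⟩ := lemmaA H hKcomp ⟨w, hw⟩ hKinv hfin
  obtain ⟨e, hed, he0, hge⟩ := quot_lemma hd0 hU'o H.holo hC hρ hρU hyK hy (by
    obtain ⟨x, hx, hb⟩ := hA w hw
    have hxy : ∀ i, x i = y := fun i => by
      have : x i ∈ U' ∩ g ⁻¹' {w} := ⟨hKU' (hx i).1, (hx i).2⟩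
      rw [hy] at this
      exact this
    intro z hz
    have := hb z hz
    simpa [hxy] using this)
  obtain ⟨f, hfc, hfe⟩ := Complex.exists_continuousOn_pow_eq (U := U') (g := e)
    (show IsSimplyConnected U' from H.disk'.2.2) hU'o hed.continuousOn
    (by rintro ⟨z, hz, h0⟩; exact he0 z hz h0) hd0
  have hfd : DifferentiableOn ℂ f U' := by
    intro z hz
    refine (root_diffAt hd0 (hfc.continuousAt (hU'o.mem_nhds hz)) (Eventually.of_forall hfe)
      ((hed z hz).differentiableAt (hU'o.mem_nhds hz)) (he0 z hz)).differentiableWithinAt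
  set F : ℂ → ℂ := fun z => (z - y) * f z with hF
  have hFd : DifferentiableOn ℂ F U' := (differentiableOn_id.sub_const y).mul hfd
  have hFg : ∀ z ∈ U', F z ^ d = g z - w := by
    intro z hz
    rw [hge z hz, hF]; simp only [mul_pow, hfe]
  have hFy : F y = 0 := by simp [hF]
  have hFopen : ∀ z ∈ U', 𝓝 (F z) ≤ Filter.map F (𝓝 z) := by
    intro z hz
    rcases ((hFd.analyticOnNhd hU'o) z hz).eventually_constant_or_nhds_le_map_nhds with h | h
    · exfalso
      have h1 : ∀ᶠ x in 𝓝 z, g x = g z := by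
        filter_upwards [h, hU'o.mem_nhds hz] with x hx hxU
        have h2 := hFg x hxU
        rw [hx, hFg z hz] at h2
        exact (sub_left_inj.1 h2).symm
      have h3 : {g z} ∈ 𝓝 (g z) := by
        refine hopen z hz ?_
        exact Filter.mem_map.2 h1
      exact (infinite_of_mem_nhds (g z) h3) (finite_singleton _)
    · exact h
  -- rotation invariance of the image
  have hrot : ∀ ζ : ℂ, ζ ^ d = 1 → ∀ z ∈ U', ∃ z' ∈ U', F z' = ζ * F z := by
    intro ζ hζ
    set S := {z | z ∈ U' ∧ ∃ z' ∈ U', F z' = ζ * F z} with hS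
    have hSo : IsOpen S := by
      rw [isOpen_iff_mem_nhds]
      rintro z ⟨hz, z', hz', hzz⟩
      have h1 : F '' U' ∈ 𝓝 (ζ * F z) := by
        rw [← hzz]
        exact hFopen z' hz' (image_mem_map (hU'o.mem_nhds hz'))
      have h2 : ContinuousAt (fun x => ζ * F x) z :=
        continuousAt_const.mul (hFd.continuousOn.continuousAt (hU'o.mem_nhds hz))
      filter_upwards [h2 h1, hU'o.mem_nhds hz] with x hx hxU
      obtain ⟨x', hx', hxx⟩ := hx
      exact ⟨hxU, x', hx', hxx⟩
    have hsub : U' ⊆ S := by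
      refine H.disk'.2.1.isPreconnected.subset_of_closure_inter_subset hSo
        ⟨y, hyU.1, hyU.1, y, hyU.1, by simp [hFy]⟩ ?_
      rintro z ⟨hzc, hz⟩
      obtain ⟨u, huS, hu⟩ := mem_closure_iff_seq_limit.1 hzc
      choose huU u' hu' huu using huS
      have hgu : Tendsto (fun n => g (u n)) atTop (𝓝 (g z)) :=
        (hgc.continuousAt (hU'o.mem_nhds hz)).tendsto.comp hu
      have hcomp := H.proper _ (by
        rintro x (rfl | ⟨n, rfl⟩)
        · exact H.mapsTo hz
        · exact H.mapsTo (huU n)) hgu.isCompact_insert_range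
      obtain ⟨z', hz', φ, hφ, hlim⟩ := hcomp.tendsto_subseq (x := u') (fun n => by
        refine ⟨hu' n, ?_⟩
        have h1 := hFg _ (hu' n)
        rw [huu n, mul_pow, hζ, one_mul, hFg _ (huU n)] at h1
        rw [mem_preimage, ← sub_left_inj.1 h1]
        exact Or.inr ⟨n, rfl⟩)
      refine ⟨hz, z', hz'.1, ?_⟩
      have h1 : Tendsto (fun n => F (u' (φ n))) atTop (𝓝 (F z')) :=
        (hFd.continuousOn.continuousAt (hU'o.mem_nhds hz'.1)).tendsto.comp hlim
      have h2 : Tendsto (fun n => ζ * F (u (φ n))) atTop (𝓝 (ζ * F z)) :=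
        ((hFd.continuousOn.continuousAt (hU'o.mem_nhds hz)).tendsto.comp
          (hu.comp hφ.tendsto_atTop)).const_mul ζ
      refine tendsto_nhds_unique h1 ?_
      simpa only [huu] using h2
    exact fun z hz => (hsub hz).2
  -- the image of each fibre is the full set of roots
  have hFim : ∀ u ∈ U, F '' (U' ∩ g ⁻¹' {u}) = {s | s ^ d = u - w} := by
    intro u hu
    ext s
    constructor
    · rintro ⟨z, ⟨hz, hzu⟩, rfl⟩
      show F z ^ d = u - w
      rw [hFg z hz]
      rw [show g z = u from hzu]
    · intro hs
      have hs : s ^ d = u - w := hs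
      obtain ⟨z, hz, hzu⟩ := H.deg.1 u hu
      have hzu : g z = u := hzu
      have h1 : F z ^ d = s ^ d := by rw [hFg z hz, hs, hzu]
      by_cases h0 : F z = 0
      · rw [h0, zero_pow hd0] at h1
        have h2 : s = 0 := (pow_eq_zero_iff hd0).1 h1.symm
        exact ⟨z, ⟨hz, hzu⟩, by rw [h0, h2]⟩
      · obtain ⟨z', hz', hzz⟩ := hrot (s / F z) (by rw [div_pow, h1, div_self]; rw [← h1]; exact pow_ne_zero _ h0) z hz
        rw [div_mul_cancel₀ _ h0] at hzz
        refine ⟨z', ⟨hz', ?_⟩, hzz⟩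
        have h3 := hFg z' hz'
        rw [hzz, hs] at h3
        exact (sub_left_inj.1 h3).symm
  have hroots : ∀ u, u ≠ w → ({s : ℂ | s ^ d = u - w}).ncard = d := by
    intro u hu
    have hprim := Complex.isPrimitiveRoot_exp d hd0
    have h1 := hprim.nthRoots_nodup (a := u - w) (sub_ne_zero.2 hu)
    have h2 := hprim.card_nthRoots (u - w)
    rw [if_pos (IsAlgClosed.exists_pow_nat_eq (u - w) (Nat.pos_of_ne_zero hd0))] at h2
    have h3 : {s : ℂ | s ^ d = u - w} = ((Polynomial.nthRoots d (u - w)).toFinset : Set ℂ) := by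
      ext s
      simp [Polynomial.mem_nthRoots (Nat.pos_of_ne_zero hd0)]
    rw [h3, Set.ncard_coe_finset, Multiset.toFinset_card_of_nodup h1, h2]
  have hinjf : ∀ u ∈ U, u ≠ w → u ∉ g '' critPts g U' → InjOn F (U' ∩ g ⁻¹' {u}) := by
    intro u hu huw huc
    have h1 := H.deg.2 u hu huc
    refine Set.injOn_of_ncard_image_eq ?_ (Set.finite_of_ncard_ne_zero (by rw [h1]; exact hd0))
    rw [hFim u hu, hroots u huw, h1]
  have hinj : InjOn F U' := by
    intro z1 hz1 z2 hz2 h12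
    by_contra hne
    obtain ⟨V1, V2, hV1, hV2, hV⟩ := t2_separation_nhds hne
    have hN : (F '' (V1 ∩ U')) ∩ (F '' (V2 ∩ U')) ∈ 𝓝 (F z1) := by
      refine inter_mem ?_ ?_
      · exact hFopen z1 hz1 (image_mem_map (inter_mem hV1 (hU'o.mem_nhds hz1)))
      · rw [h12]
        exact hFopen z2 hz2 (image_mem_map (inter_mem hV2 (hU'o.mem_nhds hz2)))
    have hbad : {s : ℂ | w + s ^ d ∈ insert w (g '' critPts g U')}.Finite := by
      have h1 : {s : ℂ | w + s ^ d ∈ insert w (g '' critPts g U')} =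
          ⋃ u ∈ insert w (g '' critPts g U'), {s : ℂ | s ^ d = u - w} := by
        ext s
        simp only [mem_ofPred_eq, mem_iUnion, exists_prop]
        constructor
        · intro h; exact ⟨_, h, by ring⟩
        · rintro ⟨u, hu, hs⟩
          rw [hs, add_sub_cancel]; exact hu
      rw [h1]
      refine Set.Finite.biUnion ((hfin.image g).insert w) fun u _ => ?_
      by_cases huw : u = w
      · refine (finite_singleton (0:ℂ)).subset fun s hs => ?_
        have hs : s ^ d = u - w := hs
        rw [huw, sub_self] at hs
        exact (pow_eq_zero_iff hd0).1 hs
      · exact Set.finite_of_ncard_ne_zero (by rw [hroots u huw]; exact hd0)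
    obtain ⟨s, ⟨⟨a, ha, has⟩, b, hb, hbs⟩, hsb⟩ := ((infinite_of_mem_nhds _ hN).sdiff hbad).nonempty
    have hga : g a = w + s ^ d := by rw [← has, hFg a ha.2]; ring
    have hgb : g b = w + s ^ d := by rw [← hbs, hFg b hb.2]; ring
    have hsb' : w + s ^ d ≠ w ∧ w + s ^ d ∉ g '' critPts g U' := by
      constructor
      · intro h; exact hsb (Or.inl h)
      · intro h; exact hsb (Or.inr h)
    have hab := hinjf (w + s ^ d) (hga ▸ H.mapsTo ha.2) hsb'.1 hsb'.2 ⟨ha.2, hga⟩ ⟨hb.2, hgb⟩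
      (has.trans hbs.symm)
    exact Set.disjoint_left.1 hV ha.1 (hab ▸ hb.1)
  intro c hc
  by_contra hcy
  have hcy : c ≠ y := hcy
  have hcK' := hcK hc
  have hcw : g c ≠ w := by
    intro h
    have : c ∈ U' ∩ g ⁻¹' {w} := ⟨hc.1, h⟩
    rw [hy] at this
    exact hcy this
  have hgcK : g c ∈ K := by
    rw [← hKinv] at hcK'
    exact hcK'.2
  obtain ⟨x, hx, hb⟩ := hA (g c) hgcK
  have hT : ∀ z ∈ K, z ∈ thickening ρ K := fun z hz => self_subset_thickening hρ K hz
  have hfib : U' ∩ g ⁻¹' {g c} = range x := by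
    ext z
    constructor
    · rintro ⟨hz, hzc⟩
      have hzc : g z = g c := hzc
      have hzK : z ∈ K := by rw [← hKinv]; exact ⟨hz, by rw [mem_preimage, hzc]; exact hgcK⟩
      have h1 := (hb z (hT z hzK)).2
      rw [hzc, sub_self, norm_zero, mul_zero] at h1
      have h2 : ∏ i, ‖z - x i‖ = 0 := le_antisymm h1 (Finset.prod_nonneg fun _ _ => norm_nonneg _)
      obtain ⟨i, -, hi⟩ := Finset.prod_eq_zero_iff.1 h2
      exact ⟨i, (sub_eq_zero.1 (norm_eq_zero.1 hi)).symm⟩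
    · rintro ⟨i, rfl⟩
      exact ⟨hKU' (hx i).1, (hx i).2⟩
  have hxinj : Injective x := by
    have h1 : (range x).ncard = d := by
      rw [← hfib, ← (hinj.mono inter_subset_left).ncard_image,
        hFim _ (H.mapsTo hc.1), hroots _ hcw]
    rw [← image_univ] at h1
    rw [← injOn_univ]
    refine Set.injOn_of_ncard_image_eq ?_ finite_univ
    rw [h1, Set.ncard_univ]; simp
  obtain ⟨i, hi⟩ : c ∈ range x := by rw [← hfib]; exact ⟨hc.1, rfl⟩
  have hder : HasDerivAt g 0 c := by
    rw [← hc.2]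
    exact ((H.holo c hc.1).differentiableAt (hU'o.mem_nhds hc.1)).hasDerivAt
  -- compare
  set Q : ℂ → ℝ := fun z => ∏ j ∈ Finset.univ.erase i, ‖z - x j‖ with hQ
  have hQc : Tendsto Q (𝓝[≠] c) (𝓝 (Q c)) := by
    refine Tendsto.mono_left ?_ nhdsWithin_le_nhds
    refine Continuous.tendsto ?_ c
    rw [hQ]; fun_prop
  have hQ0 : 0 < Q c := by
    refine Finset.prod_pos fun j hj => norm_pos_iff.2 (sub_ne_zero.2 ?_)
    rw [← hi]
    exact fun h => (Finset.ne_of_mem_erase hj) (hxinj h).symm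
  have hslope := (hasDerivAt_iff_tendsto_slope.1 hder).norm
  have h2 : Q c ≤ C * ‖(0:ℂ)‖ := by
    refine le_of_tendsto_of_tendsto hQc (hslope.const_mul C) ?_
    filter_upwards [mem_nhdsWithin_of_mem_nhds (isOpen_thickening.mem_nhds (hT c (hcK hc))), self_mem_nhdsWithin] with z hz hzc
    have h3 := (hb z hz).2
    rw [← Finset.mul_prod_erase _ _ (Finset.mem_univ i), hi] at h3
    have h4 : 0 < ‖z - c‖ := norm_pos_iff.2 (sub_ne_zero.2 hzc)
    rw [slope_def_field, norm_div, ← mul_div_assoc, le_div_iff₀ h4]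
    show Q z * _ ≤ _
    rw [mul_comm]; exact h3
  rw [norm_zero, mul_zero] at h2
  linarith

theorem two_pre {g : ℂ → ℂ} {U' U : Set ℂ} {d : ℕ} (H : PLSetting g U' U d) {K : Set ℂ}
    (hKcomp : IsCompact K) (hKinv : U' ∩ g ⁻¹' K = K) (hcK : critPts g U' ⊆ K)
    (hfin : (critPts g U').Finite) {w : ℂ} (hw : w ∈ K) :
    ∃ p q : ℂ, p ∈ K ∧ q ∈ K ∧ p ≠ q ∧ g (g p) = w ∧ g (g q) = w := by
  have hKU' : K ⊆ U' := by rw [← hKinv]; exact inter_subset_left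
  have hKU : K ⊆ U := hKU'.trans H.subset
  have hmem : ∀ z ∈ U', g z ∈ K → z ∈ K := fun z hz hg => by rw [← hKinv]; exact ⟨hz, hg⟩
  by_contra hcon
  push Not at hcon
  obtain ⟨y, hyU, hyw⟩ := H.deg.1 w (hKU hw)
  have hyw : g y = w := hyw
  have hyK := hmem y hyU (hyw ▸ hw)
  obtain ⟨x, hxU, hxy⟩ := H.deg.1 y (hKU hyK)
  have hxy : g x = y := hxy
  have hxK := hmem x hxU (hxy ▸ hyK)
  have hun : ∀ x' ∈ K, g (g x') = w → x' = x := by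
    intro x' hx' h
    by_contra hne
    exact hcon x' x hx' hxK hne h (by rw [hxy, hyw])
  have h1 : U' ∩ g ⁻¹' {w} = {y} := by
    ext y'
    constructor
    · rintro ⟨hy', hyw'⟩
      have hyw' : g y' = w := hyw'
      have hyK' := hmem y' hy' (hyw' ▸ hw)
      obtain ⟨x', hxU', hxy'⟩ := H.deg.1 y' (hKU hyK')
      have hxy' : g x' = y' := hxy'
      have := hun x' (hmem x' hxU' (hxy' ▸ hyK')) (by rw [hxy', hyw'])
      rw [this, hxy] at hxy'
      exact hxy'.symm
    · rintro rfl
      exact ⟨hyU, hyw⟩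
  have h2 : U' ∩ g ⁻¹' {y} = {x} := by
    ext x'
    constructor
    · rintro ⟨hx', hxw'⟩
      have hxw' : g x' = y := hxw'
      exact hun x' (hmem x' hx' (hxw' ▸ hyK)) (by rw [hxw', hyw])
    · rintro rfl
      exact ⟨hxU, hxy⟩
  have h3 := rh H hKcomp hKinv hcK hfin hw h1
  have h4 := rh H hKcomp hKinv hcK hfin hyK h2
  obtain ⟨c, hc⟩ := crit_nonempty H
  have h5 : c = y := h3 hc
  have h6 : c = x := h4 hc
  have hyx : y = x := h5.symm.trans h6
  subst hyx
  have h7 : critPts g U' = {y} := by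
    refine Subset.antisymm h3 ?_
    rintro _ rfl
    rw [← h5]; exact hc
  refine H.postCrit_singleton y ?_ h2
  have h8 : (⋃ n : ℕ, g^[n] '' critPts g U') = {y} := by
    rw [h7]
    simp only [image_singleton]
    have : ∀ n : ℕ, g^[n] y = y := fun n => iterate_fixed hxy n
    simp [this]
  rw [postCrit, h8, closure_singleton]

theorem lemmaG {g : ℂ → ℂ} {U' U : Set ℂ} {d : ℕ} (H : PLSetting g U' U d) {K : Set ℂ}
    (hKcomp : IsCompact K) (hKinv : U' ∩ g ⁻¹' K = K) (hcK : critPts g U' ⊆ K)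
    (hfin : (critPts g U').Finite) :
    ∃ (C ρ ρ2 : ℝ) (X : ℂ → Fin d × Fin d → ℂ), 1 ≤ C ∧ 0 < ρ ∧ 0 < ρ2 ∧
      (∀ w ∈ K, ∀ i, X w i ∈ K) ∧
      (∀ w ∈ K, ∀ z ∈ thickening ρ K, ‖g (g z) - w‖ ≤ C * ∏ i, ‖z - X w i‖ ∧
        ∏ i, ‖z - X w i‖ ≤ C * ‖g (g z) - w‖) ∧
      ∀ w ∈ K, ∃ a b, ρ2 ≤ dist (X w a) (X w b) := by
  have hKne : K.Nonempty := (crit_nonempty H).mono hcK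
  have hKU' : K ⊆ U' := by rw [← hKinv]; exact inter_subset_left
  have hKU : K ⊆ U := hKU'.trans H.subset
  have hU'o := H.disk'.1
  obtain ⟨C, ρ, hC, hρ, hρU, hA⟩ := lemmaA H hKcomp hKne hKinv hfin
  choose! x hx hb using hA
  have hgK : ∀ z ∈ K, g z ∈ K := by
    intro z hz
    rw [← hKinv] at hz
    exact hz.2
  obtain ⟨ρ', hρ', hsub⟩ := hKcomp.exists_cthickening_subset_open
    ((H.holo.continuousOn.isOpen_inter_preimage hU'o (isOpen_thickening (δ := ρ) (E := K))))
    (fun z hz => ⟨hKU' hz, self_subset_thickening hρ K (hgK z hz)⟩)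
  have hC0 : 0 < C := by linarith
  set X : ℂ → Fin d × Fin d → ℂ := fun w i => x (x w i.1) i.2 with hX
  have hXK : ∀ w ∈ K, ∀ i, X w i ∈ K := fun w hw i => (hx _ (hx w hw i.1).1 i.2).1
  set ρ1 := min ρ ρ' with hρ1
  have hρ1p : 0 < ρ1 := lt_min hρ hρ'
  have hC1 : 1 ≤ C ^ (d + 1) := one_le_pow₀ hC
  have hprod : ∀ (w z : ℂ), ∏ i, ‖z - X w i‖ = ∏ i, ∏ j, ‖z - x (x w i) j‖ := by
    intro w z
    rw [Fintype.prod_prod_type]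
  have hest : ∀ w ∈ K, ∀ z ∈ thickening ρ1 K, ‖g (g z) - w‖ ≤ C ^ (d+1) * ∏ i, ‖z - X w i‖ ∧
        ∏ i, ‖z - X w i‖ ≤ C ^ (d+1) * ‖g (g z) - w‖ := by
    intro w hw z hz
    have hz1 : z ∈ thickening ρ K := thickening_mono (min_le_left _ _) K hz
    have hz2 : g z ∈ thickening ρ K :=
      (hsub (thickening_subset_cthickening _ _ (thickening_mono (min_le_right _ _) K hz))).2
    have h1 := hb w hw (g z) hz2
    have h2 : ∀ i, _ := fun i => hb (x w i) (hx w hw i).1 z hz1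
    rw [hprod]
    constructor
    · calc ‖g (g z) - w‖ ≤ C * ∏ i, ‖g z - x w i‖ := h1.1
        _ ≤ C * ∏ i, (C * ∏ j, ‖z - x (x w i) j‖) := by
          gcongr with i
          exact (h2 i).1
        _ = C ^ (d+1) * ∏ i, ∏ j, ‖z - x (x w i) j‖ := by
          rw [Finset.prod_mul_distrib]; simp; ring
    · calc ∏ i, ∏ j, ‖z - x (x w i) j‖ ≤ ∏ i, (C * ‖g z - x w i‖) := by
            gcongr with i
            exact (h2 i).2
        _ = C ^ d * ∏ i, ‖g z - x w i‖ := by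
          rw [Finset.prod_mul_distrib]; simp
        _ ≤ C ^ d * (C * ‖g (g z) - w‖) := by gcongr; exact h1.2
        _ = C ^ (d+1) * ‖g (g z) - w‖ := by ring
  -- separation
  obtain ⟨ρ2, hρ2, hsep⟩ : ∃ ρ2 > 0, ∀ w ∈ K, ∃ a b, ρ2 ≤ dist (X w a) (X w b) := by
    refine hKcomp.induction_on (p := fun s => ∃ ρ2 > 0, ∀ w ∈ s, ∃ a b, ρ2 ≤ dist (X w a) (X w b))
      ⟨1, one_pos, by simp⟩ ?_ ?_ ?_
    · rintro s t hst ⟨r, hr, h⟩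
      exact ⟨r, hr, fun w hw => h w (hst hw)⟩
    · rintro s t ⟨r, hr, h⟩ ⟨r', hr', h'⟩
      refine ⟨min r r', lt_min hr hr', ?_⟩
      rintro w (hw | hw)
      · obtain ⟨a, b, hab⟩ := h w hw
        exact ⟨a, b, (min_le_left _ _).trans hab⟩
      · obtain ⟨a, b, hab⟩ := h' w hw
        exact ⟨a, b, (min_le_right _ _).trans hab⟩
    · intro w0 hw0
      obtain ⟨p, q, hp, hq, hpq, hgp, hgq⟩ := two_pre H hKcomp hKinv hcK hfin hw0
      set δ := dist p q / 4 with hδ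
      have hδp : 0 < δ := by have := dist_pos.2 hpq; positivity
      have hη : 0 < δ ^ (Fintype.card (Fin d × Fin d)) / C ^ (d+1) := by positivity
      have hnear : ∀ w ∈ K, dist w w0 < δ ^ (Fintype.card (Fin d × Fin d)) / C ^ (d+1) →
          ∀ u ∈ K, g (g u) = w0 → ∃ a, dist u (X w a) < δ := by
        intro w hw hd u hu hgu
        by_contra hcon
        push Not at hcon
        have h1 := (hest w hw u (self_subset_thickening hρ1p K hu)).2
        have h2 : δ ^ (Fintype.card (Fin d × Fin d)) ≤ ∏ i, ‖u - X w i‖ := by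
          rw [← Finset.card_univ, ← Finset.prod_const]
          refine Finset.prod_le_prod (fun _ _ => hδp.le) fun i _ => ?_
          rw [← dist_eq_norm]; exact hcon i
        rw [lt_div_iff₀ (by positivity)] at hd
        rw [hgu, ← dist_eq_norm, dist_comm] at h1
        linarith
      refine ⟨ball w0 (δ ^ (Fintype.card (Fin d × Fin d)) / C ^ (d+1)) ∩ K, ?_, δ, hδp, ?_⟩
      · rw [inter_comm]
        exact inter_mem_nhdsWithin K (ball_mem_nhds w0 hη)
      · rintro w ⟨hwb, hw⟩
        obtain ⟨a, ha⟩ := hnear w hw hwb p hp hgp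
        obtain ⟨b, hb'⟩ := hnear w hw hwb q hq hgq
        refine ⟨a, b, ?_⟩
        have h1 := dist_triangle4 p (X w a) (X w b) q
        rw [dist_comm (X w b) q] at h1
        have h2 : dist p q = 4 * δ := by rw [hδ]; ring
        linarith
  exact ⟨C ^ (d+1), ρ1, ρ2, X, hC1, hρ1p, hρ2, hXK, hest, hsep⟩

/-- Logarithmic potential of a finite multiset. -/
def pot (s : Multiset ℂ) (z : ℂ) : ℝ := (s.map fun x => -Real.log ‖z - x‖).sum

/-- There is a finite multiset of points of `K` with potential at most `lam` off the
`R`-neighbourhood. -/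
def PotBd (K : Set ℂ) (R lam : ℝ) : Prop :=
  ∃ s : Multiset ℂ, s ≠ 0 ∧ (∀ x ∈ s, x ∈ K) ∧
    ∀ z, R ≤ infDist z K → pot s z ≤ lam * (Multiset.card s : ℝ)

theorem pot_le {s : Multiset ℂ} {z : ℂ} {c : ℝ} (h : ∀ x ∈ s, -Real.log ‖z - x‖ ≤ c) :
    pot s z ≤ c * (Multiset.card s : ℝ) := by
  have := Multiset.sum_le_card_nsmul (s.map fun x => -Real.log ‖z - x‖) c (by
    intro y hy
    obtain ⟨x, hx, rfl⟩ := Multiset.mem_map.1 hy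
    exact h x hx)
  rw [Multiset.card_map, nsmul_eq_mul] at this
  rw [pot, mul_comm]; exact this

theorem norm_ge_infDist {K : Set ℂ} {x : ℂ} (hx : x ∈ K) (z : ℂ) : infDist z K ≤ ‖z - x‖ := by
  rw [← dist_eq_norm]; exact infDist_le_dist_of_mem hx

theorem PotBd.base {K : Set ℂ} (hK : K.Nonempty) {R : ℝ} (hR : 0 < R) :
    PotBd K R (-Real.log R) := by
  obtain ⟨x, hx⟩ := hK
  refine ⟨{x}, by simp, by simpa using hx, fun z hz => pot_le ?_⟩
  intro y hy
  rw [Multiset.mem_singleton.1 hy]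
  have := Real.log_le_log hR (hz.trans (norm_ge_infDist hx z))
  linarith

theorem PotBd.mono {K : Set ℂ} {R lam lam' : ℝ} (h : PotBd K R lam) (hl : lam ≤ lam') :
    PotBd K R lam' := by
  obtain ⟨s, h0, hs, h⟩ := h
  refine ⟨s, h0, hs, fun z hz => (h z hz).trans ?_⟩
  gcongr

theorem PotBd.step {K : Set ℂ} (hK : IsCompact K) {G : ℂ → ℂ} {ι : Type} [Fintype ι]
    {C ρ : ℝ} {X : ℂ → ι → ℂ} (hC : 1 ≤ C) (hρ : 0 < ρ) (hι : 2 ≤ Fintype.card ι)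
    (hXK : ∀ w ∈ K, ∀ i, X w i ∈ K)
    (hest : ∀ w ∈ K, ∀ z ∈ thickening ρ K, ‖G z - w‖ ≤ C * ∏ i, ‖z - X w i‖)
    {R R' lam : ℝ} (hR : 0 < R) (hR' : 0 < R') (hl : 0 ≤ lam)
    (hB : ∀ z ∈ thickening ρ K, R ≤ infDist z K → R' ≤ infDist (G z) K)
    (h : PotBd K R' lam) :
    PotBd K R (lam / Fintype.card ι + (Real.log C + |Real.log ρ|)) := by
  obtain ⟨s, h0, hs, h⟩ := h
  have hN : (0:ℝ) < Fintype.card ι := by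
    have : 0 < Fintype.card ι := by omega
    exact_mod_cast this
  have hN1 : (1:ℝ) ≤ Fintype.card ι := by
    have : 1 ≤ Fintype.card ι := by omega
    exact_mod_cast this
  have hlC : 0 ≤ Real.log C := Real.log_nonneg hC
  set s' : Multiset ℂ := s.bind fun x => Finset.univ.val.map (X x) with hs'
  have hcard : (Multiset.card s' : ℝ) = Multiset.card s * Fintype.card ι := by
    have : Multiset.card s' = Multiset.card s * Fintype.card ι := by
      rw [hs', Multiset.card_bind]
      have : (Multiset.card ∘ fun x => Finset.univ.val.map (X x)) = fun _ : ℂ => Fintype.card ι := by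
        funext x; simp
      rw [this]; simp
    exact_mod_cast this
  have hs'K : ∀ x ∈ s', x ∈ K := by
    intro y hy
    rw [hs', Multiset.mem_bind] at hy
    obtain ⟨x, hx, hy⟩ := hy
    obtain ⟨i, -, rfl⟩ := Multiset.mem_map.1 hy
    exact hXK x (hs x hx) i
  have hcs : (0:ℝ) < Multiset.card s := by exact_mod_cast Multiset.card_pos.2 h0
  refine ⟨s', ?_, hs'K, ?_⟩
  · intro h1
    rw [h1] at hcard
    simp only [Multiset.card_zero, Nat.cast_zero] at hcard
    have := mul_pos hcs hN
    linarith
  intro z hz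
  by_cases hzT : z ∈ thickening ρ K
  · have hGz := hB z hzT hz
    have h1 : pot s' z = (s.map fun x => ∑ i, -Real.log ‖z - X x i‖).sum := by
      rw [pot, hs', Multiset.map_bind, Multiset.sum_bind]
      congr 1
      refine Multiset.map_congr rfl fun x _ => ?_
      rw [Multiset.map_map]; rfl
    have h2 : pot s' z ≤ (s.map fun x => Real.log C + -Real.log ‖G z - x‖).sum := by
      rw [h1]
      refine Multiset.sum_map_le_sum_map _ _ fun x hx => ?_
      have hpos : ∀ i, 0 < ‖z - X x i‖ := fun i =>
        (hR.trans_le hz).trans_le (norm_ge_infDist (hXK x (hs x hx) i) z)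
      have hposG : 0 < ‖G z - x‖ := (hR'.trans_le hGz).trans_le (norm_ge_infDist (hs x hx) _)
      have h3 := Real.log_le_log hposG (hest x (hs x hx) z hzT)
      rw [Real.log_mul (by linarith) (Finset.prod_ne_zero_iff.2 fun i _ => (hpos i).ne'),
        Real.log_prod (fun i _ => (hpos i).ne')] at h3
      rw [Finset.sum_neg_distrib]
      linarith
    rw [Multiset.sum_map_add] at h2
    simp only [Multiset.map_const', Multiset.sum_replicate, nsmul_eq_mul] at h2
    have h3 := h (G z) hGz
    rw [pot] at h3
    rw [hcard]
    have h4 : (lam / Fintype.card ι + (Real.log C + |Real.log ρ|)) * (Multiset.card s * Fintype.card ι)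
        = lam * Multiset.card s + Multiset.card s * ((Real.log C + |Real.log ρ|) * Fintype.card ι) := by
      field_simp
    rw [h4]
    have h5 : Real.log C ≤ (Real.log C + |Real.log ρ|) * Fintype.card ι := by
      have h6 : 0 ≤ Real.log C + |Real.log ρ| := by positivity
      have := abs_nonneg (Real.log ρ)
      nlinarith
    have h6 := mul_le_mul_of_nonneg_left h5 hcs.le
    linarith
  · refine pot_le fun x hx => ?_
    have h1 : ρ ≤ ‖z - x‖ := by
      rw [← dist_eq_norm]
      by_contra hlt
      exact hzT (mem_thickening_iff.2 ⟨x, hs'K x hx, not_le.1 hlt⟩)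
    have h2 := Real.log_le_log hρ h1
    have h3 := neg_abs_le (Real.log ρ)
    have h4 : 0 ≤ lam / Fintype.card ι := by positivity
    linarith

theorem lemmaB {K : Set ℂ} (hK : IsCompact K) (hKne : K.Nonempty) {G : ℂ → ℂ} {ι : Type} [Fintype ι]
    [DecidableEq ι] {C ρ ρ2 : ℝ} {X : ℂ → ι → ℂ} (hC : 1 ≤ C) (hρ2 : 0 < ρ2)
    (hXK : ∀ w ∈ K, ∀ i, X w i ∈ K)
    (hest : ∀ w ∈ K, ∀ z ∈ thickening ρ K, ∏ i, ‖z - X w i‖ ≤ C * ‖G z - w‖)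
    (hsep : ∀ w ∈ K, ∃ a b, ρ2 ≤ dist (X w a) (X w b)) {R : ℝ} (hR : 0 < R)
    (z : ℂ) (hz : z ∈ thickening ρ K) (hRz : R ≤ infDist z K) :
    R ^ (Fintype.card ι - 1) / (1 + 2 * C / ρ2) ≤ infDist (G z) K := by
  obtain ⟨w, hw, hwd⟩ := hK.exists_infDist_eq_dist hKne (G z)
  have hC0 : 0 < C := by linarith
  obtain ⟨a, ha⟩ : ∃ a, ρ2 / 2 ≤ ‖z - X w a‖ := by
    obtain ⟨a, b, hab⟩ := hsep w hw
    by_contra hcon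
    push Not at hcon
    have h1 := hcon a
    have h2 := hcon b
    rw [← dist_eq_norm] at h1 h2
    have := dist_triangle_left (X w a) (X w b) z
    linarith
  have h1 : ρ2 / 2 * R ^ (Fintype.card ι - 1) ≤ ∏ i, ‖z - X w i‖ := by
    rw [← Finset.mul_prod_erase _ _ (Finset.mem_univ a)]
    have h2 : R ^ (Fintype.card ι - 1) ≤ ∏ i ∈ Finset.univ.erase a, ‖z - X w i‖ := by
      rw [← Finset.card_univ, ← Finset.card_erase_of_mem (Finset.mem_univ a), ← Finset.prod_const]
      exact Finset.prod_le_prod (fun _ _ => hR.le) fun i _ =>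
        hRz.trans (norm_ge_infDist (hXK w hw i) z)
    gcongr
  have h2 := h1.trans (hest w hw z hz)
  rw [hwd, dist_eq_norm, div_le_iff₀ (by positivity)]
  have h3 : R ^ (Fintype.card ι - 1) ≤ 2 * C / ρ2 * ‖G z - w‖ := by
    have : R ^ (Fintype.card ι - 1) = (2 / ρ2) * (ρ2 / 2 * R ^ (Fintype.card ι - 1)) := by
      field_simp
    rw [this]
    calc (2 / ρ2) * (ρ2 / 2 * R ^ (Fintype.card ι - 1)) ≤ (2 / ρ2) * (C * ‖G z - w‖) := by gcongr
      _ = _ := by ring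
  nlinarith [norm_nonneg (G z - w)]

theorem pot_uniform {K : Set ℂ} (hK : IsCompact K) (hKne : K.Nonempty) {G : ℂ → ℂ} {ι : Type}
    [Fintype ι] [DecidableEq ι] {C ρ ρ2 : ℝ} {X : ℂ → ι → ℂ} (hC : 1 ≤ C) (hρ : 0 < ρ)
    (hρ2 : 0 < ρ2) (hι : 3 ≤ Fintype.card ι)
    (hXK : ∀ w ∈ K, ∀ i, X w i ∈ K)
    (hest : ∀ w ∈ K, ∀ z ∈ thickening ρ K, ‖G z - w‖ ≤ C * ∏ i, ‖z - X w i‖ ∧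
        ∏ i, ‖z - X w i‖ ≤ C * ‖G z - w‖)
    (hsep : ∀ w ∈ K, ∃ a b, ρ2 ≤ dist (X w a) (X w b)) :
    ∃ lam : ℝ, 1 ≤ lam ∧ ∀ R, 0 < R → R ≤ 1 → PotBd K R lam := by
  set N := Fintype.card ι with hN
  set k := N - 1 with hk
  have hkN : (k : ℝ) = N - 1 := by rw [hk, Nat.cast_sub (by omega)]; simp
  have hN3 : (3:ℝ) ≤ N := by exact_mod_cast hι
  set C3 := 1 + 2 * C / ρ2 with hC3
  have hC31 : 1 ≤ C3 := by
    have : 0 ≤ 2 * C / ρ2 := by positivity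
    linarith
  set B := Real.log C + |Real.log ρ| with hB
  have hB0 : 0 ≤ B := by
    have := Real.log_nonneg hC
    positivity
  set L := Real.log C3 with hL
  have hL0 : 0 ≤ L := Real.log_nonneg hC31
  have hq0 : (0:ℝ) ≤ k / N := by positivity
  have hind : ∀ n : ℕ, ∀ R, 0 < R → R ≤ 1 →
      PotBd K R (((k:ℝ) / N) ^ n * (-Real.log R + L) + 2 * B) := by
    intro n
    induction n with
    | zero =>
      intro R hR hR1
      refine (PotBd.base hKne hR).mono ?_
      simp only [pow_zero]; linarith
    | succ n ih =>
      intro R hR hR1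
      have hR' : 0 < R ^ k / C3 := by positivity
      have hR'1 : R ^ k / C3 ≤ 1 := by
        rw [div_le_one (by positivity)]
        exact (pow_le_one₀ hR.le hR1).trans hC31
      have h1 := ih _ hR' hR'1
      have hlog : -Real.log (R ^ k / C3) = k * (-Real.log R) + L := by
        rw [Real.log_div (by positivity) (by positivity), Real.log_pow]; ring
      have hlR : 0 ≤ -Real.log R := by
        have := Real.log_nonpos hR.le hR1
        linarith
      rw [hlog] at h1
      have hl0 : 0 ≤ ((k:ℝ) / N) ^ n * (k * (-Real.log R) + L + L) + 2 * B := by positivity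
      refine (PotBd.step hK hC hρ (by omega) hXK (fun w hw z hz => (hest w hw z hz).1) hR hR' hl0
        (lemmaB hK hKne hC hρ2 hXK (fun w hw z hz => (hest w hw z hz).2) hsep hR) h1).mono ?_
      rw [← hN, ← hB]
      have h2 : (((k:ℝ) / N) ^ n * (k * (-Real.log R) + L + L) + 2 * B) / N + B
          = ((k:ℝ) / N) ^ n * ((k * (-Real.log R) + L + L) / N) + (2 * B / N + B) := by ring
      rw [h2, pow_succ, mul_assoc]
      have h3 : (k * (-Real.log R) + L + L) / N ≤ (k:ℝ) / N * (-Real.log R + L) := by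
        rw [div_mul_eq_mul_div]
        gcongr
        nlinarith
      have h4 : 2 * B / N ≤ B := by
        rw [div_le_iff₀ (by linarith)]
        nlinarith
      have h5 : (0:ℝ) ≤ (k / N) ^ n := by positivity
      have := mul_le_mul_of_nonneg_left h3 h5
      linarith
  refine ⟨1 + 2 * B, by linarith, fun R hR hR1 => ?_⟩
  have hq1 : (k:ℝ) / N < 1 := by
    rw [div_lt_one (by linarith)]; linarith
  have ht : Tendsto (fun n : ℕ => ((k:ℝ) / N) ^ n * (-Real.log R + L)) atTop (𝓝 (0 * (-Real.log R + L))) :=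
    (tendsto_pow_atTop_nhds_zero_of_lt_one hq0 hq1).mul_const _
  rw [zero_mul] at ht
  obtain ⟨n, hn⟩ := (ht.eventually (gt_mem_nhds (one_pos))).exists
  exact (hind n R hR hR1).mono (by linarith)

/-- Normalized potential. -/
def npot (s : Multiset ℂ) (z : ℂ) : ℝ := (Multiset.card s : ℝ)⁻¹ * pot s z

theorem npot_le_add {s : Multiset ℂ} (h0 : s ≠ 0) {z y : ℂ} {c : ℝ}
    (h : ∀ x ∈ s, -Real.log ‖z - x‖ ≤ -Real.log ‖y - x‖ + c) : npot s z ≤ npot s y + c := by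
  have hcs : (0:ℝ) < Multiset.card s := by exact_mod_cast Multiset.card_pos.2 h0
  have h1 : pot s z ≤ (s.map fun x => -Real.log ‖y - x‖ + c).sum :=
    Multiset.sum_map_le_sum_map _ _ h
  rw [Multiset.sum_map_add] at h1
  simp only [Multiset.map_const', Multiset.sum_replicate, nsmul_eq_mul] at h1
  have h2 := mul_le_mul_of_nonneg_left h1 (inv_nonneg.2 hcs.le)
  rw [mul_add, inv_mul_cancel_left₀ hcs.ne'] at h2
  exact h2

theorem npot_le {s : Multiset ℂ} (h0 : s ≠ 0) {z : ℂ} {c : ℝ}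
    (h : ∀ x ∈ s, -Real.log ‖z - x‖ ≤ c) : npot s z ≤ c := by
  have hcs : (0:ℝ) < Multiset.card s := by exact_mod_cast Multiset.card_pos.2 h0
  rw [npot, inv_mul_le_iff₀ hcs, mul_comm]
  exact pot_le h

theorem le_npot {s : Multiset ℂ} (h0 : s ≠ 0) {z : ℂ} {c : ℝ}
    (h : ∀ x ∈ s, c ≤ -Real.log ‖z - x‖) : c ≤ npot s z := by
  have hcs : (0:ℝ) < Multiset.card s := by exact_mod_cast Multiset.card_pos.2 h0
  have := Multiset.card_nsmul_le_sum (s := s.map fun x => -Real.log ‖z - x‖) (a := c) (by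
    intro y hy
    obtain ⟨x, hx, rfl⟩ := Multiset.mem_map.1 hy
    exact h x hx)
  rw [Multiset.card_map, nsmul_eq_mul] at this
  rw [npot, le_inv_mul_iff₀ hcs]
  exact this

theorem pot_harm (s : Multiset ℂ) (z : ℂ) (h : ∀ x ∈ s, z ≠ x) : HarmonicAt (pot s) z := by
  induction s using Multiset.induction_on with
  | empty =>
    have : pot 0 = fun _ => 0 := by funext y; simp [pot]
    rw [this]; exact harmonicAt_const 0
  | cons a s ih =>
    have h1 : pot (a ::ₘ s) = (-fun y => Real.log ‖y - a‖) + pot s := by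
      funext y; simp [pot]
    rw [h1]
    refine HarmonicAt.add (HarmonicAt.neg ?_) (ih fun x hx => h x (Multiset.mem_cons_of_mem hx))
    exact AnalyticAt.harmonicAt_log_norm (f := fun y => y - a) (by fun_prop)
      (sub_ne_zero.2 (h a (Multiset.mem_cons_self a s)))

theorem npot_harm (s : Multiset ℂ) (z : ℂ) (h : ∀ x ∈ s, z ≠ x) : HarmonicAt (npot s) z :=
  (pot_harm s z h).const_smul (c := (Multiset.card s : ℝ)⁻¹)

theorem npot_harmOn {K : Set ℂ} {s : Multiset ℂ} (hs : ∀ x ∈ s, x ∈ K) {W : Set ℂ}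
    (hW : ∀ z ∈ W, 0 < infDist z K) : HarmonicOnNhd (npot s) W := by
  intro z hz
  refine npot_harm s z fun x hx h => ?_
  have := hW z hz
  rw [h, infDist_zero_of_mem (hs x hx)] at this
  exact lt_irrefl _ this

theorem norm_le_infDist {K : Set ℂ} (hK : IsCompact K) {x : ℂ} (hx : x ∈ K) (z : ℂ) :
    ‖z - x‖ ≤ infDist z K + diam K := by
  obtain ⟨y, hy, hyd⟩ := hK.exists_infDist_eq_dist ⟨x, hx⟩ z
  rw [← dist_eq_norm, hyd]
  exact (dist_triangle z y x).trans (add_le_add_right (dist_le_diam_of_mem hK.isBounded hy hx) _)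

theorem ext_max {K : Set ℂ} (hK : IsCompact K) {s : Multiset ℂ} (h0 : s ≠ 0)
    (hs : ∀ x ∈ s, x ∈ K) {ε M : ℝ} (hε : 0 < ε) (hM : ∀ z, infDist z K = ε → npot s z ≤ M)
    (z : ℂ) (hz : ε ≤ infDist z K) : npot s z ≤ M := by
  rcases hz.eq_or_lt with h | hz
  · exact hM z h.symm
  obtain ⟨x0, hx0⟩ := Multiset.exists_mem_of_ne_zero h0
  have hx0 := hs x0 hx0
  set T := max (‖z - x0‖ + 1) (diam K + Real.exp (-M)) with hT
  set B := {y | ε < infDist y K} ∩ ball x0 T with hB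
  have hcont : Continuous fun y => infDist y K := continuous_infDist_pt K
  have hBo : IsOpen B := (isOpen_lt continuous_const hcont).inter isOpen_ball
  have hcl : closure B ⊆ {y | ε ≤ infDist y K} ∩ closedBall x0 T := by
    refine closure_minimal ?_ ((isClosed_le continuous_const hcont).inter isClosed_closedBall)
    rintro y ⟨hy, hy'⟩
    exact ⟨show ε ≤ infDist y K from le_of_lt (show ε < infDist y K from hy), ball_subset_closedBall hy'⟩
  have hBc : IsCompact (closure B) :=
    (isCompact_closedBall x0 T).of_isClosed_subset isClosed_closure (hcl.trans inter_subset_right)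
  have hharm : HarmonicOnNhd (fun y => npot s y - M) (closure B) := by
    intro y hy
    exact (npot_harmOn hs (W := closure B) (fun y hy => hε.trans_le (hcl hy).1) y hy).sub
      (harmonicAt_const M)
  have := max_principle hBo hBc hharm.continuousOn (hharm.mono subset_closure) ?_ z ⟨hz, ?_⟩
  · linarith
  · intro y hy
    rw [hBo.frontier_eq] at hy
    obtain ⟨hy1, hy2⟩ := hy
    have hy3 := hcl hy1
    have hy31 : ε ≤ infDist y K := hy3.1
    rw [sub_nonpos]
    by_cases h : infDist y K = ε
    · exact hM y h
    · have hd : T ≤ dist y x0 := by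
        by_contra hlt
        exact hy2 ⟨lt_of_le_of_ne hy31 (Ne.symm h), not_le.1 hlt⟩
      refine npot_le h0 fun x hx => ?_
      have h1 : Real.exp (-M) ≤ ‖y - x‖ := by
        have h2 : diam K + Real.exp (-M) ≤ T := le_max_right _ _
        have h3 := dist_triangle y x x0
        have h4 := dist_le_diam_of_mem hK.isBounded (hs x hx) hx0
        rw [← dist_eq_norm]
        linarith
      have h2 := Real.log_le_log (Real.exp_pos _) h1
      rw [Real.log_exp] at h2
      linarith
  · rw [mem_ball, dist_eq_norm]
    exact lt_of_lt_of_le (lt_add_one _) (le_max_left _ _)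

theorem conn_superset {K S : Set ℂ} (hK : IsCompact K) (hKfull : IsConnected Kᶜ)
    (hS : IsCompact S) (hSK : S ⊆ Kᶜ) {b : ℂ} (hb : b ∈ Kᶜ) :
    ∃ E, IsCompact E ∧ IsPreconnected E ∧ E ⊆ Kᶜ ∧ b ∈ E ∧ S ⊆ E := by
  have hKo : IsOpen Kᶜ := hK.isClosed.isOpen_compl
  have hpc := (hKo.isConnected_iff_isPathConnected).1 hKfull
  refine hS.induction_on (p := fun S => ∃ E, IsCompact E ∧ IsPreconnected E ∧ E ⊆ Kᶜ ∧ b ∈ E ∧ S ⊆ E)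
    ⟨{b}, isCompact_singleton, isPreconnected_singleton, by simpa using hb, rfl, by simp⟩ ?_ ?_ ?_
  · rintro s t hst ⟨E, h1, h2, h3, h4, h5⟩
    exact ⟨E, h1, h2, h3, h4, hst.trans h5⟩
  · rintro s t ⟨E, h1, h2, h3, h4, h5⟩ ⟨E', h1', h2', h3', h4', h5'⟩
    exact ⟨E ∪ E', h1.union h1', h2.union b h4 h4' h2', union_subset h3 h3', Or.inl h4,
      union_subset_union h5 h5'⟩
  · intro z hz
    obtain ⟨r, hr, hrK⟩ := Metric.nhds_basis_closedBall.mem_iff.1 (hKo.mem_nhds (hSK hz))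
    have hJ := hpc.joinedIn b hb z (hSK hz)
    refine ⟨closedBall z r, mem_nhdsWithin_of_mem_nhds (closedBall_mem_nhds z hr),
      range hJ.somePath ∪ closedBall z r, ?_, ?_, ?_, ?_, subset_union_right⟩
    · exact (isCompact_range hJ.somePath.continuous).union (isCompact_closedBall z r)
    · exact (isPreconnected_range hJ.somePath.continuous).union z ⟨1, by simp⟩
        (mem_closedBall_self hr.le) (convex_closedBall z r).isPreconnected
    · refine union_subset ?_ hrK
      rintro _ ⟨t, rfl⟩
      exact hJ.somePath_mem t
    · exact Or.inl ⟨0, by simp⟩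

theorem exists_infDist_eq {K : Set ℂ} (hK : IsCompact K) (hKne : K.Nonempty) {ε : ℝ} (hε : 0 ≤ ε) :
    ∃ z, infDist z K = ε := by
  obtain ⟨x, hx⟩ := hKne
  refine mem_range_of_exists_le_of_exists_ge (continuous_infDist_pt K) ⟨x, ?_⟩
    ⟨x + ((ε + diam K : ℝ) : ℂ), ?_⟩
  · rw [infDist_zero_of_mem hx]; exact hε
  · have h1 := norm_le_infDist hK hx (x + ((ε + diam K : ℝ) : ℂ))
    rw [add_sub_cancel_left, Complex.norm_real, Real.norm_of_nonneg (add_nonneg hε diam_nonneg)] at h1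
    linarith

theorem gap {K : Set ℂ} (hK : IsCompact K) (hKne : K.Nonempty) (hKfull : IsConnected Kᶜ)
    {ρ0 : ℝ} (hρ0 : 0 < ρ0) :
    ∃ ε1 > 0, ε1 < ρ0 ∧ ∃ δ0 > 0, ∀ s : Multiset ℂ, s ≠ 0 → (∀ x ∈ s, x ∈ K) → ∀ M : ℝ,
      (∀ z, infDist z K = ε1 → npot s z ≤ M) → ∀ z, infDist z K = ρ0 → npot s z ≤ M - δ0 := by
  obtain ⟨x0, hx0⟩ := id hKne
  have hcont : Continuous fun y => infDist y K := continuous_infDist_pt K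
  have hdiam : 0 ≤ diam K := diam_nonneg
  set Dm := diam K + ρ0 + 1 with hDm
  set b : ℂ := x0 + ((3 * Dm : ℝ) : ℂ) with hb
  have hbn : ‖b - x0‖ = 3 * Dm := by
    rw [hb, add_sub_cancel_left, Complex.norm_real, Real.norm_of_nonneg (by positivity)]
  have hbb : ∀ y ∈ ball b 1, 2 * Dm ≤ infDist y K := by
    intro y hy
    have h1 := norm_le_infDist hK hx0 y
    have h2 : dist b x0 ≤ dist b y + dist y x0 := dist_triangle _ _ _
    rw [dist_eq_norm b x0, hbn, dist_eq_norm y x0] at h2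
    rw [mem_ball, dist_comm] at hy
    linarith
  have hbK : b ∈ Kᶜ := by
    intro h
    have := hbb b (mem_ball_self one_pos)
    rw [infDist_zero_of_mem h] at this
    linarith
  set S := {z | infDist z K = ρ0} with hS
  have hScl : IsClosed S := isClosed_eq hcont continuous_const
  have hSc : IsCompact S := by
    refine (isCompact_closedBall x0 (ρ0 + diam K)).of_isClosed_subset hScl fun z hz => ?_
    rw [mem_closedBall, dist_eq_norm, ← show infDist z K = ρ0 from hz]
    exact norm_le_infDist hK hx0 z
  have hSK : S ⊆ Kᶜ := by
    intro z hz hzK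
    have : infDist z K = ρ0 := hz
    rw [infDist_zero_of_mem hzK] at this
    linarith
  obtain ⟨E, hEc, hEp, hEK, hbE, hSE⟩ := conn_superset hK hKfull hSc hSK hbK
  obtain ⟨e, heE, hemin⟩ := hEc.exists_isMinOn ⟨b, hbE⟩ hcont.continuousOn
  have hepos : 0 < infDist e K := (hK.isClosed.notMem_iff_infDist_pos hKne).1 (hEK heE)
  set ε1 := min (infDist e K / 2) (ρ0 / 2) with hε1
  have hε1p : 0 < ε1 := lt_min (by positivity) (by positivity)
  have hε1ρ : ε1 < ρ0 := (min_le_right _ _).trans_lt (by linarith)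
  set W := {z | ε1 < infDist z K} with hW
  have hWo : IsOpen W := isOpen_lt continuous_const hcont
  have hEW : E ⊆ W := by
    intro z hz
    have h1 : infDist e K ≤ infDist z K := hemin hz
    have h2 : ε1 ≤ infDist e K / 2 := min_le_left _ _
    show ε1 < infDist z K
    linarith
  have hl2 : 0 < Real.log 2 := Real.log_pos one_lt_two
  set 𝓕 : Set (ℂ → ℝ) := {u | SubH W u ∧ (∀ z ∈ W, u z ≤ 1) ∧ ∀ y ∈ ball b 1, u y ≤ 1 - Real.log 2}
    with h𝓕
  have hbG : b ∈ negG W 𝓕 := by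
    refine ⟨Real.log 2, hl2, 1, one_pos, ?_, fun v hv => hv.2.2⟩
    intro y hy
    have := hbb y hy
    show ε1 < infDist y K
    linarith
  have hEG : E ⊆ negG W 𝓕 :=
    clopen_prop hWo (negG_open _ _) (negG_prop (fun v hv => hv.1) (fun v hv => hv.2.1)) hEp hEW
      ⟨b, hbE, hbG⟩
  obtain ⟨δ0, hδ0, hδ⟩ : ∃ δ > 0, ∀ y ∈ S, ∀ v ∈ 𝓕, v y ≤ 1 - δ := by
    refine hSc.induction_on (p := fun S => ∃ δ > 0, ∀ y ∈ S, ∀ v ∈ 𝓕, v y ≤ 1 - δ)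
      ⟨1, one_pos, by simp⟩ ?_ ?_ ?_
    · rintro s t hst ⟨δ, h, h'⟩
      exact ⟨δ, h, fun y hy => h' y (hst hy)⟩
    · rintro s t ⟨δ, h, h'⟩ ⟨η, k, k'⟩
      refine ⟨min δ η, lt_min h k, ?_⟩
      rintro y (hy | hy) v hv
      · have := h' y hy v hv
        have := min_le_left δ η
        linarith
      · have := k' y hy v hv
        have := min_le_right δ η
        linarith
    · intro z hz
      obtain ⟨δ, hδ, r, hr, -, h⟩ := hEG (hSE hz)
      exact ⟨ball z r, mem_nhdsWithin_of_mem_nhds (ball_mem_nhds z hr), δ, hδ,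
        fun y hy v hv => h v hv y hy⟩
  refine ⟨ε1, hε1p, hε1ρ, δ0, hδ0, fun s h0 hs M hM z hz => ?_⟩
  have hMD : -Real.log Dm ≤ M := by
    obtain ⟨z1, hz1⟩ := exists_infDist_eq hK hKne hε1p.le
    refine le_trans (le_npot h0 fun x hx => ?_) (hM z1 hz1)
    have h1 := norm_le_infDist hK (hs x hx) z1
    have h2 := norm_ge_infDist (hs x hx) z1
    have h3 := Real.log_le_log (lt_of_lt_of_le (hz1 ▸ hε1p) h2) (show ‖z1 - x‖ ≤ Dm by linarith)
    linarith
  have hmem : (fun y => npot s y - (M - 1)) ∈ 𝓕 := by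
    refine ⟨SubH.of_harm ?_, ?_, ?_⟩
    · intro y hy
      exact (npot_harmOn hs (W := W) (fun z hz => hε1p.trans hz) y hy).sub (harmonicAt_const (M - 1))
    · intro y hy
      have := ext_max hK h0 hs hε1p hM y (le_of_lt hy)
      show npot s y - (M - 1) ≤ 1
      linarith
    · intro y hy
      have h1 : npot s y ≤ -Real.log (2 * Dm) := by
        refine npot_le h0 fun x hx => ?_
        have := Real.log_le_log (by positivity) ((hbb y hy).trans (norm_ge_infDist (hs x hx) y))
        linarith
      rw [Real.log_mul two_ne_zero (by positivity)] at h1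
      show npot s y - (M - 1) ≤ 1 - Real.log 2
      linarith
  have := hδ z hz _ hmem
  beta_reduce at this
  linarith

theorem SS_fin_max {K U : Set ℂ} (t : Finset (ℂ → ℝ)) (ht : ∀ v ∈ t, v ∈ SS K U) :
    ∃ v ∈ SS K U, ∀ u ∈ t, ∀ z, u z ≤ v z := by
  classical
  induction t using Finset.induction_on with
  | empty =>
    refine ⟨fun _ => 0, ⟨SubH.of_harm fun z _ => harmonicAt_const 0, ?_, ?_⟩, by simp⟩
    · intro z _; exact zero_le_one
    · intro z _; exact le_rfl
  | insert a t ha ih =>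
    obtain ⟨v, hv, hmax⟩ := ih fun v hv => ht v (Finset.mem_insert_of_mem hv)
    have haS := ht a (Finset.mem_insert_self a t)
    refine ⟨fun z => max (a z) (v z), ⟨haS.1.max hv.1, ?_, ?_⟩, ?_⟩
    · intro z hz; exact max_le (haS.2.1 z hz) (hv.2.1 z hz)
    · intro z hz; exact max_le (haS.2.2 z hz) (hv.2.2 z hz)
    · intro u hu z
      rcases Finset.mem_insert.1 hu with rfl | hu
      · exact le_max_left _ _
      · exact (hmax u hu z).trans (le_max_right _ _)

theorem neg_of_pot {K U : Set ℂ} (hK : IsCompact K) (hKne : K.Nonempty) (hKfull : IsConnected Kᶜ)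
    (hUo : IsOpen U) (hKU : K ⊆ U) {lam : ℝ} (hl : 1 ≤ lam)
    (hpot : ∀ R, 0 < R → R ≤ 1 → PotBd K R lam) :
    ((U \ K) ∩ negG (U \ K) (SS K U)).Nonempty := by
  obtain ⟨ρ0, hρ0, hρ0U⟩ := hK.exists_cthickening_subset_open hUo hKU
  have hthick : ∀ r, 0 ≤ r → ∀ z, infDist z K ≤ r → z ∈ cthickening r K := by
    intro r hr z hz
    rw [hK.cthickening_eq_biUnion_closedBall hr]
    obtain ⟨y, hy, hyd⟩ := hK.exists_infDist_eq_dist hKne z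
    exact mem_biUnion hy (by rw [mem_closedBall, ← hyd]; exact hz)
  obtain ⟨x0, hx0⟩ := id hKne
  have hcont : Continuous fun y => infDist y K := continuous_infDist_pt K
  have hdiam : 0 ≤ diam K := diam_nonneg
  obtain ⟨ε1, hε1, hε1ρ, δ0, hδ0, hgap⟩ := gap hK hKne hKfull hρ0
  set Dm := diam K + ρ0 + 1 with hDm
  have hlD : 0 ≤ Real.log Dm := Real.log_nonneg (by linarith)
  set c := 1 / (2 * (lam + Real.log Dm + δ0)) with hc
  have hc0 : 0 < c := by positivity
  set r := min (min (ε1 * δ0 / 2) (ε1 / 2)) ((ρ0 - ε1) / 2) with hr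
  have hr0 : 0 < r := lt_min (lt_min (by positivity) (by positivity)) (by linarith)
  have hr1 : r ≤ ε1 * δ0 / 2 := (min_le_left _ _).trans (min_le_left _ _)
  have hr2 : r ≤ ε1 / 2 := (min_le_left _ _).trans (min_le_right _ _)
  have hr3 : r ≤ (ρ0 - ε1) / 2 := min_le_right _ _
  set S1 := {z | infDist z K = ε1} with hS1
  have hS1c : IsCompact S1 := by
    refine (isCompact_closedBall x0 (ε1 + diam K)).of_isClosed_subset
      (isClosed_eq hcont continuous_const) fun z hz => ?_
    rw [mem_closedBall, dist_eq_norm, ← show infDist z K = ε1 from hz]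
    exact norm_le_infDist hK hx0 z
  have hS1ne : S1.Nonempty := exists_infDist_eq hK hKne hε1.le
  have hLip : ∀ y z : ℂ, infDist y K ≤ infDist z K + dist y z := fun y z =>
    infDist_le_infDist_add_dist
  -- the key estimate
  have key : ∀ v ∈ SS K U, ∃ z ∈ S1, ∀ y ∈ ball z r, v y ≤ 1 - c * δ0 / 2 := by
    intro v hv
    obtain ⟨R0, hR0, hR0v⟩ := hK.exists_cthickening_subset_open
      (hv.1.1.isOpen_inter_preimage hUo (isOpen_Iio (a := (1/2 : ℝ))))
      (fun z hz => ⟨hKU hz, by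
        have := hv.2.2 z hz
        rw [mem_preimage, mem_Iio]; linarith⟩)
    set R := min (min R0 (ε1 / 2 / 2)) 1 with hR
    have hRp : 0 < R := lt_min (lt_min hR0 (by positivity)) one_pos
    have hR1 : R ≤ 1 := min_le_right _ _
    have hRR0 : R ≤ R0 := (min_le_left _ _).trans (min_le_left _ _)
    have hRε : R ≤ ε1 / 2 / 2 := (min_le_left _ _).trans (min_le_right _ _)
    obtain ⟨s, h0, hs, hsl⟩ := hpot R hRp hR1
    have hcs : (0:ℝ) < Multiset.card s := by exact_mod_cast Multiset.card_pos.2 h0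
    have hnl : ∀ z, R ≤ infDist z K → npot s z ≤ lam := by
      intro z hz
      rw [npot, inv_mul_le_iff₀ hcs, mul_comm]
      exact hsl z hz
    obtain ⟨z, hz, hzmax⟩ := hS1c.exists_isMaxOn hS1ne
      (npot_harmOn hs (W := S1) (fun z hz => by rw [show infDist z K = ε1 from hz]; exact hε1)).continuousOn
    have hzε : infDist z K = ε1 := hz
    have hg := hgap s h0 hs (npot s z) (fun y hy => hzmax hy)
    have hMD : -Real.log Dm ≤ npot s z := by
      refine le_npot h0 fun x hx => ?_
      have h1 := norm_le_infDist hK (hs x hx) z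
      have h2 := norm_ge_infDist (hs x hx) z
      have h3 := Real.log_le_log (lt_of_lt_of_le (hzε ▸ hε1) h2) (show ‖z - x‖ ≤ Dm by linarith)
      linarith
    set B := {y | R < infDist y K} ∩ {y | infDist y K < ρ0} with hB
    have hBo : IsOpen B := (isOpen_lt continuous_const hcont).inter (isOpen_lt hcont continuous_const)
    have hcl : closure B ⊆ {y | R ≤ infDist y K} ∩ {y | infDist y K ≤ ρ0} := by
      refine closure_minimal ?_ ((isClosed_le continuous_const hcont).inter
        (isClosed_le hcont continuous_const))
      rintro y ⟨hy, hy'⟩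
      have hy : R < infDist y K := hy
      have hy' : infDist y K < ρ0 := hy'
      exact ⟨show R ≤ infDist y K from hy.le, show infDist y K ≤ ρ0 from hy'.le⟩
    have hBc : IsCompact (closure B) := by
      refine (isCompact_closedBall x0 (ρ0 + diam K)).of_isClosed_subset isClosed_closure fun y hy => ?_
      have h1 : infDist y K ≤ ρ0 := (hcl hy).2
      have h2 := norm_le_infDist hK hx0 y
      rw [mem_closedBall, dist_eq_norm]
      linarith
    have hBU : closure B ⊆ U := fun y hy => hρ0U (hthick ρ0 hρ0.le y (hcl hy).2)
    have hharm : HarmonicOnNhd (fun y => 1 - c * (npot s y - (npot s z - δ0))) (closure B) := by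
      intro y hy
      have h1 : HarmonicAt (fun y => npot s y - (npot s z - δ0)) y :=
        (npot_harmOn hs (W := closure B) (fun y hy => hRp.trans_le (hcl hy).1) y hy).sub
          (harmonicAt_const (npot s z - δ0))
      exact (harmonicAt_const (1:ℝ)).sub (h1.const_smul (c := c))
    have hcomp := hv.1.2 B hBo hBc hBU _ hharm.continuousOn (hharm.mono subset_closure) (by
      intro y hy
      rw [hBo.frontier_eq] at hy
      obtain ⟨hy1, hy2⟩ := hy
      have hyR : R ≤ infDist y K := (hcl hy1).1
      have hyρ : infDist y K ≤ ρ0 := (hcl hy1).2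
      beta_reduce
      by_cases h : infDist y K = ρ0
      · have h1 := hg y h
        have h2 := hv.2.1 y (hBU hy1)
        have h3 : c * (npot s y - (npot s z - δ0)) ≤ 0 :=
          mul_nonpos_of_nonneg_of_nonpos hc0.le (by linarith)
        linarith
      · have hyR' : infDist y K ≤ R := by
          by_contra hlt
          exact hy2 ⟨not_le.1 hlt, lt_of_le_of_ne hyρ h⟩
        have h1 : y ∈ _ := hR0v (hthick R0 hR0.le y (hyR'.trans hRR0))
        have h2 : v y < 1 / 2 := h1.2
        have h3 := hnl y hyR
        have h4 : c * (npot s y - (npot s z - δ0)) ≤ c * (lam + Real.log Dm + δ0) :=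
          mul_le_mul_of_nonneg_left (by linarith) hc0.le
        have h5 : c * (lam + Real.log Dm + δ0) = 1 / 2 := by
          have : lam + Real.log Dm + δ0 ≠ 0 := by positivity
          rw [hc]; field_simp
        linarith)
    refine ⟨z, hz, fun y hy => ?_⟩
    rw [mem_ball] at hy
    have hyB : y ∈ B := by
      have h1 := hLip y z
      have h2 := hLip z y
      rw [dist_comm] at h2
      constructor
      · show R < infDist y K
        linarith
      · show infDist y K < ρ0
        linarith
    have h1 := hcomp y hyB
    beta_reduce at h1
    have h2 : npot s z ≤ npot s y + δ0 / 2 := by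
      refine npot_le_add h0 fun x hx => ?_
      have hzx : ε1 ≤ ‖z - x‖ := hzε ▸ norm_ge_infDist (hs x hx) z
      have hzp : 0 < ‖z - x‖ := hε1.trans_le hzx
      have hyp : 0 < ‖y - x‖ := by
        have h3 : R < infDist y K := hyB.1
        have := norm_ge_infDist (hs x hx) y
        linarith
      have h3 := Real.log_le_sub_one_of_pos (div_pos hyp hzp)
      rw [Real.log_div hyp.ne' hzp.ne'] at h3
      have h4 : ‖y - x‖ / ‖z - x‖ ≤ 1 + δ0 / 2 := by
        rw [div_le_iff₀ hzp]
        have h5 : ‖y - x‖ ≤ ‖z - x‖ + dist y z := by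
          have := dist_triangle y z x
          rw [dist_eq_norm y x, dist_eq_norm z x] at this
          linarith
        nlinarith
      linarith
    have h3 : c * (δ0 / 2) ≤ c * (npot s y - (npot s z - δ0)) :=
      mul_le_mul_of_nonneg_left (by linarith) hc0.le
    linarith
  -- compactness
  by_contra hcon
  rw [Set.not_nonempty_iff_eq_empty] at hcon
  have hbad : ∀ z ∈ S1, ∃ v ∈ SS K U, ∃ y ∈ ball z (r / 2), 1 - c * δ0 / 2 < v y := by
    intro z hz
    by_contra hno
    push Not at hno
    have hzε : infDist z K = ε1 := hz
    have hball : ball z (r / 2) ⊆ U \ K := by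
      intro y hy
      rw [mem_ball] at hy
      have h1 := hLip y z
      have h2 := hLip z y
      rw [dist_comm] at h2
      refine ⟨hρ0U (hthick ρ0 hρ0.le y (by linarith)), fun hyK => ?_⟩
      rw [infDist_zero_of_mem hyK] at h2
      linarith
    have : z ∈ (U \ K) ∩ negG (U \ K) (SS K U) :=
      ⟨hball (mem_ball_self (by positivity)), c * δ0 / 2, by positivity, r / 2, by positivity, hball, hno⟩
    rw [hcon] at this
    exact this
  choose! v hv y hy hvy using hbad
  obtain ⟨t, htS, htc⟩ := hS1c.elim_nhds_subcover (fun z => ball z (r / 2))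
    (fun z _ => ball_mem_nhds z (by positivity))
  classical
  obtain ⟨V, hV, hVmax⟩ := SS_fin_max (K := K) (U := U) (t.image v) (by
    intro u hu
    obtain ⟨z, hz, rfl⟩ := Finset.mem_image.1 hu
    exact hv z (htS z hz))
  obtain ⟨z, hz, hzb⟩ := key V hV
  obtain ⟨z', hz', hzz⟩ := mem_iUnion₂.1 (htc hz)
  have h1 := hy z' (htS z' hz')
  have h2 := hvy z' (htS z' hz')
  have h3 := hVmax (v z') (Finset.mem_image_of_mem v hz') (y z')
  have h4 := hzb (y z') (by
    rw [mem_ball] at h1 hzz ⊢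
    have := dist_triangle_right (y z') z z'
    linarith)
  linarith

theorem main_aux {g : ℂ → ℂ} {U' U : Set ℂ} {d : ℕ}
    (H : PLSetting g U' U d) {K : Set ℂ}
    (hKcomp : IsCompact K) (hKfull : IsConnected Kᶜ)
    (hKinv : U' ∩ g ⁻¹' K = K) (hPK : postCrit g U' ⊆ K) :
    ((U \ K) ∩ negG (U \ K) (SS K U)).Nonempty := by
  have hKU' : K ⊆ U' := by rw [← hKinv]; exact inter_subset_left
  have hcK : critPts g U' ⊆ K := fun c hc =>
    hPK (subset_closure (mem_iUnion.2 ⟨0, c, hc, rfl⟩))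
  have hKne : K.Nonempty := (crit_nonempty H).mono hcK
  have hopen := analytic_open H.disk'.1 H.disk'.2.1.isPreconnected H.disk.1 H.disk.2.1.nonempty
    H.holo H.deg.1
  have hfin := crit_finite H.disk'.1 H.disk'.2.1.isPreconnected H.holo hKcomp hcK hKU' hopen
  obtain ⟨C, ρ, ρ2, X, hC, hρ, hρ2, hXK, hest, hsep⟩ := lemmaG H hKcomp hKinv hcK hfin
  have hd := H.two_le_d
  obtain ⟨lam, hl, hpot⟩ := pot_uniform hKcomp hKne (G := fun z => g (g z)) hC hρ hρ2
    (by rw [Fintype.card_prod, Fintype.card_fin]; nlinarith) hXK hest hsep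
  exact neg_of_pot hKcomp hKne hKfull H.disk.1 (hKU'.trans H.subset) hl hpot

end Helpers

/-- **Theorem.** If `K ⊆ U` is a full compact set which is completely invariant and contains
the postcritical set, then `g : U' → U` has no repelling periodic points outside of `K`:
there is no `p ≥ 1` and `a ∈ g^{-p}(U) \ K` with `g^p(a) = a` and `|(g^p)'(a)| > 1`. -/
theorem no_repelling_outside {g : ℂ → ℂ} {U' U : Set ℂ} {d : ℕ}
    (H : PLSetting g U' U d) {K : Set ℂ}
    (hKU : K ⊆ U) (hKcomp : IsCompact K) (hKfull : IsConnected Kᶜ)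
    (hKinv : U' ∩ g ⁻¹' K = K) (hPK : postCrit g U' ⊆ K) :
    ¬ ∃ (p : ℕ) (a : ℂ), 1 ≤ p ∧ a ∉ K ∧ (∀ k < p, g^[k] a ∈ U') ∧ g^[p] a ∈ U ∧
        g^[p] a = a ∧ 1 < ‖deriv (g^[p]) a‖ := by
  rintro ⟨p, a, hp, ha, hk, _, hper, _⟩
  exact main_of_neg H hKcomp hKfull hKinv (main_aux H hKcomp hKfull hKinv hPK) p a hp ha hk hper
end
end

section
/- Let K_* ⊂ U be the unique maximal (by inclusion) full compact set with g⁻¹(K_*) = K_*. If Z is any compact set (not necessarily full) with g⁻¹(Z) = Z, then Z ⊂ K_*. -/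
open Set Function Metric Topology Filter

noncomputable section

/-- There is no continuous logarithm of `z - a` near infinity. -/
lemma no_log_near_infty (L : ℂ → ℂ) (hL : Continuous L) (a : ℂ) (R : ℝ)
    (h : ∀ z : ℂ, R < ‖z‖ → Complex.exp (L z) = z - a) : False := by
  set r : ℝ := |R| + ‖a‖ + 1 with hr
  have hr0 : 0 < r := by positivity
  set F₁ : ℝ → ℂ := fun θ => L (a + Complex.exp (Real.log r + θ * Complex.I)) with hF₁
  set F₂ : ℝ → ℂ := fun θ => θ * Complex.I + F₁ 0 with hF₂
  have hexp : ∀ θ : ℝ, Complex.exp (F₁ θ) = Complex.exp (Real.log r + θ * Complex.I) := by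
    intro θ
    have hn : ‖Complex.exp (Real.log r + θ * Complex.I)‖ = r := by
      rw [Complex.norm_exp]; simp [Real.exp_log hr0]
    have : R < ‖a + Complex.exp (Real.log r + θ * Complex.I)‖ := by
      have h1 := norm_sub_norm_le (Complex.exp (Real.log r + θ * Complex.I)) (-a)
      rw [hn, norm_neg, sub_neg_eq_add, add_comm _ a] at h1
      have := le_abs_self R
      linarith
    rw [hF₁]
    simp only
    rw [h _ this]; ring
  have hc₁ : Continuous F₁ := by rw [hF₁]; fun_prop
  have hc₂ : Continuous F₂ := by rw [hF₂]; fun_prop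
  have key : F₁ = F₂ := by
    refine Complex.isCoveringMap_exp.eq_of_comp_eq hc₁ hc₂ ?_ 0 (by simp [hF₂])
    funext θ
    apply Subtype.ext
    simp only [Function.comp]
    rw [hF₂]
    simp only
    rw [Complex.exp_add, hexp, hexp, ← Complex.exp_add]
    congr 1
    push_cast; ring
  have e1 : F₁ (2 * Real.pi) = F₁ 0 := by
    rw [hF₁]
    simp only
    congr 2
    push_cast
    rw [Complex.exp_add, Complex.exp_two_pi_mul_I]
    simp
  have e2 : F₂ (2 * Real.pi) = F₁ 0 := by rw [← key, e1]
  rw [hF₂] at e2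
  simp at e2

lemma isPreconnected_exterior (R : ℝ) (hR : 0 < R) : IsPreconnected {z : ℂ | R < ‖z‖} := by
  have : {z : ℂ | R < ‖z‖} = Complex.exp '' {z : ℂ | Real.log R < z.re} := by
    ext z
    constructor
    · intro hz
      have hz : R < ‖z‖ := hz
      have h0 : 0 < ‖z‖ := hR.trans hz
      refine ⟨Complex.log z, ?_, Complex.exp_log (norm_pos_iff.1 h0)⟩
      simpa [Complex.log_re] using Real.log_lt_log hR hz
    · rintro ⟨w, hw, rfl⟩
      have hw : Real.log R < w.re := hw
      show R < ‖Complex.exp w‖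
      rw [Complex.norm_exp]
      exact (Real.log_lt_iff_lt_exp hR).1 hw
  rw [this]
  exact (convex_halfSpace_re_gt _).isPreconnected.image _ Complex.continuous_exp.continuousOn

/-- The unbounded component of the complement of a compact planar set. -/
lemma exists_outer (Z : Set ℂ) (hZ : IsCompact Z) :
    ∃ (O : Set ℂ) (R : ℝ), IsOpen O ∧ IsConnected O ∧ O ⊆ Zᶜ ∧ {z : ℂ | R < ‖z‖} ⊆ O ∧
      closure O ∩ Zᶜ ⊆ O := by
  obtain ⟨R₀, hR₀⟩ := hZ.isBounded.exists_norm_le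
  set R : ℝ := |R₀| + 1 with hR
  have hRpos : 0 < R := by positivity
  have hsub : {z : ℂ | R < ‖z‖} ⊆ Zᶜ := by
    intro z hz hzZ
    have h1 := hR₀ z hzZ
    have hz : R < ‖z‖ := hz
    have := le_abs_self R₀
    linarith
  set p : ℂ := ((R + 1 : ℝ) : ℂ) with hp
  have hpE : p ∈ {z : ℂ | R < ‖z‖} := by
    show R < ‖p‖
    rw [hp, Complex.norm_real, Real.norm_of_nonneg (by linarith)]
    linarith
  have hpZ : p ∈ Zᶜ := hsub hpE
  refine ⟨connectedComponentIn Zᶜ p, R, hZ.isClosed.isOpen_compl.connectedComponentIn,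
    isConnected_connectedComponentIn_iff.2 hpZ, connectedComponentIn_subset _ _,
    (isPreconnected_exterior R hRpos).subset_connectedComponentIn hpE hsub, ?_⟩
  refine IsPreconnected.subset_connectedComponentIn (x := p) ?_
    ⟨subset_closure (mem_connectedComponentIn hpZ), hpZ⟩ inter_subset_right
  exact isPreconnected_connectedComponentIn.subset_closure
    (fun x hx => ⟨subset_closure hx, connectedComponentIn_subset _ _ hx⟩) inter_subset_left

/-- Holes of a compact subset of a simply connected planar domain lie in the domain. -/
lemma fill_subset {V Z O : Set ℂ} {R : ℝ} (hV : IsTopDisk V) (hZ : IsCompact Z) (hZV : Z ⊆ V)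
    (hO : IsOpen O) (hOR : {z : ℂ | R < ‖z‖} ⊆ O)
    (hcl : closure O ∩ Zᶜ ⊆ O) : Oᶜ ⊆ V := by
  classical
  intro a haO
  by_contra haV
  obtain ⟨f, hfc, hf⟩ := Complex.exists_continuousOn_eqOn_exp_comp (U := V)
    (g := fun z => z - a) hV.2.2 hV.1 (by fun_prop)
    (by
      rintro ⟨z, hz, hza⟩
      exact haV ((sub_eq_zero.1 hza) ▸ hz))
  obtain ⟨F, hF⟩ := ContinuousMap.exists_restrict_eq hZ.isClosed
    (⟨fun z : Z => f z, continuousOn_iff_continuous_restrict.1 (hfc.mono hZV)⟩ : C(Z, ℂ))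
  have hFf : ∀ z ∈ Z, F z = f z := fun z hz => DFunLike.congr_fun hF ⟨z, hz⟩
  set h : ℂ → ℂ := O.piecewise (fun z => z - a) (fun z => Complex.exp (F z)) with hh
  have hhc : Continuous h := by
    refine Continuous.piecewise ?_ (by fun_prop) (by fun_prop)
    intro z hz
    rw [hO.frontier_eq] at hz
    have hzZ : z ∈ Z := by
      by_contra hc
      exact hz.2 (hcl ⟨hz.1, hc⟩)
    rw [hFf z hzZ]
    exact (hf (hZV hzZ)).symm
  have hh0 : ∀ z, h z ≠ 0 := by
    intro z
    by_cases hz : z ∈ O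
    · simp only [hh, hz, piecewise_eq_of_mem]
      intro h0
      exact haO ((sub_eq_zero.1 h0) ▸ hz)
    · simp only [hh, hz, not_false_iff, piecewise_eq_of_notMem]
      exact Complex.exp_ne_zero _
  obtain ⟨L, hLc, hL⟩ := Complex.exists_continuousOn_eqOn_exp_comp (U := (univ : Set ℂ)) (g := h)
    (by
      have := (convex_univ (𝕜 := ℝ) (E := ℂ)).contractibleSpace univ_nonempty
      exact (inferInstance : SimplyConnectedSpace (univ : Set ℂ))) isOpen_univ hhc.continuousOn
    (by rintro ⟨z, -, hz⟩; exact hh0 z hz)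
  refine no_log_near_infty L (continuousOn_univ.1 hLc) a R fun z hz => ?_
  have := hL (mem_univ z)
  simp only [Function.comp] at this
  rw [this, hh, piecewise_eq_of_mem _ _ _ (hOR hz)]

/-- **Theorem.** If `K* ⊆ U` is the maximal full compact set with `g⁻¹(K*) = K*`, then any
compact set `Z` (not necessarily full) with `g⁻¹(Z) = Z` satisfies `Z ⊆ K*`. -/
theorem invariant_compact_subset_maximal {g : ℂ → ℂ} {U' U : Set ℂ} {d : ℕ}
    (H : PLSetting g U' U d) {Kstar : Set ℂ}
    (hKU : Kstar ⊆ U) (hKcomp : IsCompact Kstar) (hKfull : IsConnected Kstarᶜ)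
    (hKinv : U' ∩ g ⁻¹' Kstar = Kstar)
    (hKmax : ∀ K : Set ℂ, K ⊆ U → IsCompact K → IsConnected Kᶜ →
      U' ∩ g ⁻¹' K = K → K ⊆ Kstar)
    {Z : Set ℂ} (hZcomp : IsCompact Z) (hZinv : U' ∩ g ⁻¹' Z = Z) :
    Z ⊆ Kstar := by
  obtain ⟨O, R, hO, hOc, hOZ, hOR, hcl⟩ := exists_outer Z hZcomp
  have hZU' : Z ⊆ U' := by rw [← hZinv]; exact inter_subset_left
  have hfill : Oᶜ ⊆ U' := fill_subset H.disk' hZcomp hZU' hO hOR hcl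
  have hZO : Z ⊆ Oᶜ := fun z hz hzO => hOZ hzO hz
  have hcomp : IsCompact Oᶜ := by
    refine (isCompact_closedBall (0 : ℂ) R).of_isClosed_subset hO.isClosed_compl ?_
    intro z hz
    rw [mem_closedBall_zero_iff]
    by_contra hc
    exact hz (hOR (not_le.1 hc))
  have hunb : ∀ T : Set ℂ, IsCompact T → ¬ O ⊆ T := by
    intro T hT hsub
    obtain ⟨M, hM⟩ := hT.isBounded.exists_norm_le
    set t : ℝ := |R| + |M| + 1 with ht
    have htn : ‖((t : ℝ) : ℂ)‖ = t := by
      rw [Complex.norm_real, Real.norm_of_nonneg (by positivity)]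
    have h1 : (t : ℂ) ∈ O := hOR (by
      show R < ‖(t : ℂ)‖
      rw [htn]
      have := le_abs_self R
      have := abs_nonneg M
      linarith)
    have h2 := hM _ (hsub h1)
    rw [htn] at h2
    have := le_abs_self M
    have := abs_nonneg R
    linarith
  have hUo' : IsOpen U' := H.disk'.1
  have hgc : ContinuousOn g U' := H.holo.continuousOn
  have hWo : IsOpen (Oᶜ \ Z) := by
    have : Oᶜ \ Z = (closure O ∪ Z)ᶜ := by
      ext z
      constructor
      · rintro ⟨h1, h2⟩ (h3 | h3)
        · exact h1 (hcl ⟨h3, h2⟩)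
        · exact h2 h3
      · intro h
        exact ⟨fun h1 => h (Or.inl (subset_closure h1)), fun h1 => h (Or.inr h1)⟩
    rw [this]
    exact (isClosed_closure.union hZcomp.isClosed).isOpen_compl
  have hiff : ∀ z ∈ U', (g z ∈ Z ↔ z ∈ Z) := by
    intro z hz
    constructor
    · intro h
      rw [← hZinv]
      exact ⟨hz, h⟩
    · intro h
      rw [← hZinv] at h
      exact h.2
  have hopen : ∀ s ⊆ U', IsOpen s → IsOpen (g '' s) := by
    rcases (H.holo.analyticOnNhd hUo').is_constant_or_isOpen H.disk'.2.1.isPreconnected with h | h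
    · exfalso
      obtain ⟨w, hw⟩ := h
      obtain ⟨u, hu⟩ := H.disk.2.1.nonempty
      have hUw : U ⊆ {w} := by
        intro y hy
        obtain ⟨x, hx, hxy⟩ := H.deg.1 y hy
        have hxy : g x = y := hxy
        rw [mem_singleton_iff, ← hxy, hw x hx]
      have : U = {w} := subset_antisymm hUw (singleton_subset_iff.2 ((hUw hu) ▸ hu))
      have ho := H.disk.1
      rw [this] at ho
      exact not_isOpen_singleton w ho
    · exact h
  -- a subset of `O` relatively clopen in `O` and inside a compact set is empty
  have hclopen : ∀ T S : Set ℂ, IsCompact T → IsOpen S → T ∩ O = S ∩ O → ¬ (T ∩ O).Nonempty := by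
    intro T S hT hS hTS hne
    apply hunb T hT
    have : O ⊆ S ∩ O := by
      refine hOc.isPreconnected.subset_of_closure_inter_subset (hS.inter hO) ?_ ?_
      · rw [hTS] at hne
        obtain ⟨x, hx⟩ := hne
        exact ⟨x, hx.2, hx⟩
      · rintro x ⟨hx, hxO⟩
        rw [← hTS] at hx ⊢
        exact ⟨hT.isClosed.closure_subset_iff.2 inter_subset_left hx, hxO⟩
    intro x hx
    have h := this hx
    rw [← hTS] at h
    exact h.1
  have hinv : U' ∩ g ⁻¹' Oᶜ = Oᶜ := by
    apply subset_antisymm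
    · rintro z ⟨hz, hgz⟩ hzO
      refine hclopen (U' ∩ g ⁻¹' Oᶜ) (U' ∩ g ⁻¹' (Oᶜ \ Z))
        (H.proper _ (hfill.trans H.subset) hcomp) (hgc.isOpen_inter_preimage hUo' hWo) ?_
        ⟨z, ⟨hz, hgz⟩, hzO⟩
      ext x
      constructor
      · rintro ⟨⟨h1, h2⟩, h3⟩
        exact ⟨⟨h1, h2, fun h => hOZ h3 ((hiff x h1).1 h)⟩, h3⟩
      · rintro ⟨⟨h1, h2⟩, h3⟩
        exact ⟨⟨h1, h2.1⟩, h3⟩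
    · intro z hz
      refine ⟨hfill hz, fun hgz => ?_⟩
      refine hclopen (g '' Oᶜ) (g '' (Oᶜ \ Z)) (hcomp.image_of_continuousOn (hgc.mono hfill))
        (hopen _ (diff_subset.trans hfill) hWo) ?_ ⟨g z, mem_image_of_mem g hz, hgz⟩
      ext y
      constructor
      · rintro ⟨⟨x, hx, rfl⟩, h3⟩
        exact ⟨⟨x, ⟨hx, fun h => hOZ h3 ((hiff x (hfill hx)).2 h)⟩, rfl⟩, h3⟩
      · rintro ⟨⟨x, hx, rfl⟩, h3⟩
        exact ⟨⟨x, hx.1, rfl⟩, h3⟩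
  exact hZO.trans (hKmax Oᶜ (hfill.trans H.subset) hcomp (by rwa [compl_compl]) hinv)
end
end
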